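/- arXiv:1210.2557 — 13 statements merged into one kernel-verified Lean document; each statement's English description precedes it below -/
import Mathlib

section
/- Let E : ℕ → ℕ → ℕ be the recursively defined sequence (see context). Then for all d, n ∈ ℕ, E d n equals the number of multisets b of natural numbers with card b = n + 1 and ∑_{i ∈ b} 2^i = d + 1 (equivalently, the number of partitions (b₀ ≥ b₁ ≥ … ≥ b_n ≥ 0) with ∑_i 2^{b_i} = d + 1). -/
/-- For `p = 2`, the recursively defined dimensions `E d m = dim Ext^m(Δ(0), Δ(2d))`:
`E 0 0 = 1`, `E 0 m = 0` for `m ≥ 1`, and for `d ≥ 1`: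
`E d m = (if m ≥ 1 then E (d-1) (m-1) else 0) + (if d is odd then E ((d-1)/2) m else 0)`. -/
def E : ℕ → ℕ → ℕ
  | 0, 0 => 1
  | 0, _ + 1 => 0
  | d + 1, 0 => if Odd (d + 1) then E (d / 2) 0 else 0
  | d + 1, m + 1 => E d m + if Odd (d + 1) then E (d / 2) (m + 1) else 0
termination_by d m => d
decreasing_by all_goals omega

/-!
Split the multisets `b` with `∑ i ∈ b, p ^ i = s` according to whether `0 ∈ b`. Removing one zero
lowers both the size and the sum by one; if `0 ∉ b`, lowering every exponent by one divides the
sum by `p`. For `p = 2` this is the recursion defining `E`, shifted by one in both arguments, so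
that `d` odd becomes `d + 1` even. The recursion holds for cardinalities in `ℕ∞`, so finiteness of
the sets being counted comes out of it and need not be proved beforehand.
-/

theorem encard_eq_encard_preimage_add_encard_preimage {α β γ : Type*} {f : α → γ} {g : β → γ}
    (hf : f.Injective) (hg : g.Injective) (hfg : IsCompl (Set.range f) (Set.range g))
    (S : Set γ) : S.encard = (f ⁻¹' S).encard + (g ⁻¹' S).encard := by
  calc S.encard = (S \ Set.range g).encard + (S ∩ Set.range g).encard :=
        (Set.encard_sdiff_add_encard_inter S _).symm
    _ = (f '' (f ⁻¹' S)).encard + (g '' (g ⁻¹' S)).encard := by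
        rw [Set.image_preimage_eq_inter_range, Set.image_preimage_eq_inter_range,
          hfg.eq_compl, Set.sdiff_eq]
    _ = (f ⁻¹' S).encard + (g ⁻¹' S).encard := by rw [hf.encard_image, hg.encard_image]

theorem mem_range_cons_iff {α : Type*} {a : α} {b : Multiset α} :
    b ∈ Set.range (Multiset.cons a) ↔ a ∈ b :=
  ⟨by rintro ⟨c, rfl⟩; exact Multiset.mem_cons_self a c,
    fun h => (Multiset.exists_cons_of_mem h).imp fun _ => Eq.symm⟩

theorem mem_range_map_succ_iff {b : Multiset ℕ} :
    b ∈ Set.range (Multiset.map Nat.succ) ↔ 0 ∉ b := by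
  constructor
  · rintro ⟨c, rfl⟩
    simp
  · intro hb
    refine ⟨b.map Nat.pred, ?_⟩
    rw [Multiset.map_map]
    exact (Multiset.map_congr rfl fun i hi => Nat.succ_pred (ne_of_mem_of_not_mem hi hb)).trans
      b.map_id

theorem isCompl_range_cons_zero_range_map_succ :
    IsCompl (Set.range (Multiset.cons 0)) (Set.range (Multiset.map Nat.succ)) := by
  have range_map_succ : Set.range (Multiset.map Nat.succ) = (Set.range (Multiset.cons 0))ᶜ := by
    ext b
    rw [Set.mem_compl_iff, mem_range_cons_iff, mem_range_map_succ_iff]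
  rw [range_map_succ]
  exact isCompl_compl

theorem sum_pow_map_succ {R : Type*} [Semiring R] (x : R) (b : Multiset ℕ) :
    ((b.map Nat.succ).map fun i => x ^ i).sum = x * (b.map fun i => x ^ i).sum := by
  simp [Multiset.map_map, pow_succ', Multiset.sum_map_mul_left]

/-- The partitions of `s` into `k` powers of `p`, each encoded by its multiset of exponents
(faithfully when `2 ≤ p`; for `p ≤ 1` distinct exponents may give the same power). -/
def powerPartitions (p k s : ℕ) : Set (Multiset ℕ) :=
  {b | Multiset.card b = k ∧ (b.map fun i => p ^ i).sum = s}

namespace powerPartitions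

variable {p k s : ℕ}

theorem zero_zero : powerPartitions p 0 0 = {0} := by
  ext b
  simp +contextual [powerPartitions]

theorem zero_succ : powerPartitions p 0 (s + 1) = ∅ := by
  ext b
  simp +contextual [powerPartitions]

theorem succ_zero (hp : p ≠ 0) : powerPartitions p (k + 1) 0 = ∅ := by
  refine Set.eq_empty_of_forall_notMem fun b ⟨hcard, hsum⟩ => ?_
  obtain ⟨i, hi⟩ := Multiset.card_pos_iff_exists_mem.1 (hcard ▸ Nat.zero_lt_succ k : 0 < b.card)
  exact pow_ne_zero i hp (Multiset.sum_eq_zero_iff.1 hsum _ (Multiset.mem_map_of_mem _ hi))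

theorem preimage_cons_zero :
    Multiset.cons 0 ⁻¹' powerPartitions p (k + 1) (s + 1) = powerPartitions p k s := by
  ext b
  simp [powerPartitions, add_comm 1]

theorem preimage_map_succ_mul (hp : p ≠ 0) :
    Multiset.map Nat.succ ⁻¹' powerPartitions p k (p * s) = powerPartitions p k s := by
  ext b
  simp only [powerPartitions, Set.preimage_ofPred_eq, Set.mem_ofPred_eq, Multiset.card_map,
    sum_pow_map_succ, Nat.mul_right_inj hp]

theorem preimage_map_succ_of_not_dvd (h : ¬p ∣ s) :
    Multiset.map Nat.succ ⁻¹' powerPartitions p k s = ∅ := by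
  refine Set.eq_empty_of_forall_notMem fun b ⟨_, hsum⟩ => h ?_
  rw [← hsum, sum_pow_map_succ]
  exact dvd_mul_right _ _

theorem encard_succ_succ : (powerPartitions p (k + 1) (s + 1)).encard =
    (powerPartitions p k s).encard +
      (Multiset.map Nat.succ ⁻¹' powerPartitions p (k + 1) (s + 1)).encard := by
  rw [encard_eq_encard_preimage_add_encard_preimage (fun _ _ => (Multiset.cons_inj_right 0).1)
    (Multiset.map_injective Nat.succ_injective) isCompl_range_cons_zero_range_map_succ,
    preimage_cons_zero]

theorem encard_succ_succ_of_not_dvd (h : ¬p ∣ s + 1) :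
    (powerPartitions p (k + 1) (s + 1)).encard = (powerPartitions p k s).encard := by
  rw [encard_succ_succ, preimage_map_succ_of_not_dvd h, Set.encard_empty, add_zero]

theorem encard_succ_succ_of_eq_mul {t : ℕ} (h : s + 1 = p * t) :
    (powerPartitions p (k + 1) (s + 1)).encard =
      (powerPartitions p k s).encard + (powerPartitions p (k + 1) t).encard := by
  have hp : p ≠ 0 := left_ne_zero_of_mul (h.symm.trans_ne s.succ_ne_zero)
  rw [encard_succ_succ, h, preimage_map_succ_mul hp]

end powerPartitions

open powerPartitions in
theorem encard_powerPartitions_two (d n : ℕ) :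
    (powerPartitions 2 (n + 1) (d + 1)).encard = E d n := by
  have eq_two_mul {d : ℕ} (h : Odd (d + 1)) : d + 1 + 1 = 2 * (d / 2 + 1) := by grind
  have not_two_dvd {d : ℕ} (h : ¬Odd (d + 1)) : ¬2 ∣ d + 1 + 1 := by grind
  fun_induction E d n with
  | case1 =>
    rw [encard_succ_succ_of_not_dvd (by decide), zero_zero, Set.encard_singleton, Nat.cast_one]
  | case2 n =>
    rw [encard_succ_succ_of_not_dvd (by decide), succ_zero two_ne_zero, Set.encard_empty,
      Nat.cast_zero]
  | case3 d h ih =>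
    rw [encard_succ_succ_of_eq_mul (eq_two_mul h), zero_succ, Set.encard_empty, zero_add, ih]
  | case4 d h =>
    rw [encard_succ_succ_of_not_dvd (not_two_dvd h), zero_succ, Set.encard_empty, Nat.cast_zero]
  | case5 d n ih_pred ih_half =>
    split_ifs with h
    · rw [encard_succ_succ_of_eq_mul (eq_two_mul h), ih_pred, ih_half, Nat.cast_add]
    · rw [encard_succ_succ_of_not_dvd (not_two_dvd h), ih_pred, add_zero]

/-- `E d n` equals the number of multisets `b` of natural numbers with `card b = n + 1`
and `∑_{i ∈ b} 2^i = d + 1`. -/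
theorem E_eq_card_multisets (d n : ℕ) :
    E d n =
      {b : Multiset ℕ | Multiset.card b = n + 1 ∧ (b.map fun i => 2 ^ i).sum = d + 1}.ncard := by
  change E d n = (powerPartitions 2 (n + 1) (d + 1)).ncard
  rw [Set.ncard_def, encard_powerPartitions_two, ENat.toNat_natCast]
end

section
/- Let E : ℕ → ℕ → ℕ be the recursively defined sequence (see context). Then for all n ≥ 1 and all d ∈ ℕ, E d n = ∑_{k ∈ ℕ} (if 2^k divides d + 1 and (d+1)/2^k ≥ 2 then E ((d+1)/2^k − 2) (n−1) else 0); the sum is finite since 2^k ≤ d + 1 for each nonzero term. -/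
/-!
Index coefficients by `c = d + 1`. Multiplying a series by `s` shifts this index, and substituting
`s ^ 2` for `s` doubles it, so the recursion for `E` becomes the functional equation
`G(s) = F(s) + G(s ^ 2)` for `G(s) = s·gₙ(s)` and `F(s) = s·(s·gₙ₋₁(s))`. The series
`∑ₖ F(s ^ 2 ^ k)` satisfies the same equation, and the equation determines all coefficients in
positive degree, because the degree-`c` coefficient of `G(s ^ 2)` is zero or that of `G` in degree
`c / 2 < c`.
-/

open Function

theorem hasFiniteSupport_ite_pow_dvd {M : Type*} [Zero M] {b c : ℕ} (hb : 1 < b) (hc : c ≠ 0)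
    (f : ℕ → M) : HasFiniteSupport fun k : ℕ ↦ if b ^ k ∣ c then f k else 0 := by
  refine (Set.finite_Iio c).subset fun k hk ↦ ?_
  have hdvd : b ^ k ∣ c := (ite_ne_right_iff.mp hk).1
  exact (Nat.lt_pow_self hb).trans_le (Nat.le_of_dvd (Nat.pos_of_ne_zero hc) hdvd)

section DilationSum

variable {M : Type*} [AddCommMonoid M] {b c : ℕ}

theorem finsum_eq_zero_add {f : ℕ → M} (hf : HasFiniteSupport f) :
    ∑ᶠ k, f k = f 0 + ∑ᶠ k, f (k + 1) := by
  rw [← add_finsum_cond_ne 0 hf, ← finsum_mem_range Nat.succ_injective, Nat.range_succ]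
  simp only [Set.mem_ofPred_eq, Nat.pos_iff_ne_zero]

/-- The coefficient of `s ^ c` in `∑ₖ F(s ^ b ^ k)`, where `F(s) = ∑ᵢ f i · s ^ i`. For `1 < b` and
`c ≠ 0` the sum has finite support; otherwise `∑ᶠ` may take its default value `0`. -/
noncomputable def dilationSum (b : ℕ) (f : ℕ → M) (c : ℕ) : M :=
  ∑ᶠ k : ℕ, if b ^ k ∣ c then f (c / b ^ k) else 0

theorem dilationSum_eq_add (hb : 1 < b) (hc : c ≠ 0) (f : ℕ → M) :
    dilationSum b f c = f c + if b ∣ c then dilationSum b f (c / b) else 0 := by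
  rw [dilationSum, finsum_eq_zero_add (hasFiniteSupport_ite_pow_dvd hb hc fun k ↦ f (c / b ^ k))]
  congr 1
  · simp
  split_ifs with hbc
  · refine finsum_congr fun k ↦ ?_
    simp only [pow_succ', Nat.div_div_eq_div_mul, Nat.dvd_div_iff_mul_dvd hbc]
  · refine finsum_eq_zero_of_forall_eq_zero fun k ↦ if_neg fun hk ↦ hbc ?_
    exact (dvd_pow_self b k.succ_ne_zero).trans hk

theorem eq_dilationSum_of_forall_eq_add (hb : 1 < b) {f g : ℕ → M}
    (hg : ∀ c ≠ 0, g c = f c + if b ∣ c then g (c / b) else 0) (hc : c ≠ 0) :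
    g c = dilationSum b f c := by
  induction c using Nat.strong_induction_on with
  | _ c ih =>
    rw [hg c hc, dilationSum_eq_add hb hc]
    congr 1
    refine if_ctx_congr Iff.rfl (fun hbc ↦ ?_) fun _ ↦ rfl
    have hpos : 0 < c := Nat.pos_of_ne_zero hc
    exact ih (c / b) (Nat.div_lt_self hpos hb) ((Nat.div_ne_zero_iff_of_dvd hbc).mpr ⟨hc, by lia⟩)

end DilationSum

theorem E_pred_succ {c : ℕ} (hc : c ≠ 0) (m : ℕ) :
    E (c - 1) (m + 1) =
      (if 2 ≤ c then E (c - 2) m else 0) + if 2 ∣ c then E (c / 2 - 1) (m + 1) else 0 := by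
  rcases c with _ | _ | e
  · contradiction
  · simp [E]
  · have hparity : Odd (e + 1) ↔ 2 ∣ e + 2 := by grind
    have hhalf : (e + 2) / 2 - 1 = e / 2 := by lia
    simp [E, hparity, hhalf]

open Classical in
/-- The coefficient form of `s·gₙ(s) = ∑_{k ≥ 0} s^{2^k}·(s^{2^k} g_{n−1}(s^{2^k}))`:
for `n ≥ 1` and all `d`,
`E d n = ∑_{k ∈ ℕ} (if 2^k ∣ d+1 and (d+1)/2^k ≥ 2 then E ((d+1)/2^k − 2) (n−1) else 0)`;
the sum over all `k ∈ ℕ` has finite support. -/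
theorem E_recursion (n : ℕ) (hn : 1 ≤ n) (d : ℕ) :
    E d n =
      ∑ᶠ k : ℕ,
        if 2 ^ k ∣ d + 1 ∧ 2 ≤ (d + 1) / 2 ^ k then E ((d + 1) / 2 ^ k - 2) (n - 1) else 0 := by
  obtain ⟨m, rfl⟩ := Nat.exists_eq_add_of_le' hn
  have hsum : E d (m + 1) = dilationSum 2 (fun c ↦ if 2 ≤ c then E (c - 2) m else 0) (d + 1) :=
    eq_dilationSum_of_forall_eq_add (g := fun c ↦ E (c - 1) (m + 1)) one_lt_two
      (fun _ hc ↦ E_pred_succ hc m) d.succ_ne_zero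
  simpa only [dilationSum, ite_and, Nat.add_sub_cancel] using hsum
end

section
/- Let p be an odd prime and e : ℕ → ℕ → ℕ the recursively defined sequence (see context). Then for every d ∈ ℕ, e d 1 equals (the number of k ∈ ℕ with d + 1 = p^{k+1}) plus (the number of pairs (k₁, k₀) ∈ ℕ × ℕ with d + 1 = p^{k₁} + p^{k₁ + k₀ + 1}). -/
/-- For an odd prime `p`, the recursively defined dimensions
`e p d m = dim Ext^m(Δ(0), Δ(2d))` over `SL₂` in characteristic `p`:
`e 0 0 = 1`, `e 0 m = 0` for `m ≥ 1`; `e d m = 0` if `d > 0` is not of the form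
`kp` or `kp − 1` with `k ≥ 1`; and for `k ≥ 1`:
`e (kp) m = (if m ≥ 1 then e (kp−1) (m−1) else 0)` and
`e (kp−1) m = (if m ≥ 1 then e ((k−1)p) (m−1) else 0) + e (k−1) m`. -/
def e (p : ℕ) : ℕ → ℕ → ℕ
  | 0, 0 => 1
  | 0, _ + 1 => 0
  | d + 1, m =>
    if h1 : (d + 1) % p = 0 then
      match m with
      | 0 => 0
      | m' + 1 => e p d m'
    else if h2 : (d + 2) % p = 0 then
      (match m with
       | 0 => 0
       | m' + 1 => e p (d + 2 - p) m') + e p ((d + 2) / p - 1) m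
    else 0
termination_by d m => d
decreasing_by
  · omega
  · have hp : 2 ≤ p := by
      by_contra hlt
      push_neg at hlt
      interval_cases p
      · simp at h2
      · omega
    omega
  · have hp : 2 ≤ p := by
      by_contra hlt
      push_neg at hlt
      interval_cases p
      · simp at h2
      · omega
    have h3 : (d + 2) / p ≤ (d + 2) / 2 := Nat.div_le_div_left hp (by omega)
    omega

/-!
In terms of generating series, put `A = ∑ s ^ p ^ k`, `A⁺ = ∑ s ^ p ^ (k + 1)` and
`B = ∑ s ^ (p ^ k₁ + p ^ (k₁ + k₀ + 1))`. Then
`A = s + A⁺`, `A⁺(s) = A(s ^ p)` and `B(s) = B(s ^ p) + s * A⁺(s)`.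
Comparing recursions, `e p d 0` is the coefficient of `A` at `d + 1`. For `e p d 1`, if `p ∤ d + 1`
then only the recursion at multiples of `p` contributes, and it yields the term `s * A⁺` of `B`.
If `d + 1 = p * (q + 1)`, then `e p d 1 = e p (p * q) 0 + e p q 1`, and `e p (p * q) 0`, which is
`1` for `q = 0` and `0` otherwise, is the difference of the coefficients of `A` and `A⁺` at `q + 1`.
-/

/-- The number of ways to write `n` as a power of `p`, i.e. the coefficient of `s ^ n` in
`∑ s ^ p ^ k`. As with the two counts below, infinite solution sets (possible only for `p ≤ 1`)
count as `0`. -/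
noncomputable def powCount (p n : ℕ) : ℕ :=
  {k : ℕ | n = p ^ k}.ncard

/-- The number of ways to write `n` as a power of `p` with positive exponent, i.e. the coefficient
of `s ^ n` in `∑ s ^ p ^ (k + 1)`. -/
noncomputable def posPowCount (p n : ℕ) : ℕ :=
  {k : ℕ | n = p ^ (k + 1)}.ncard

/-- The number of ways to write `n` as a sum of two powers of `p` with distinct exponents, i.e. the
coefficient of `s ^ n` in `∑ s ^ (p ^ k₁ + p ^ (k₁ + k₀ + 1))`. The exponents are recorded as
the pair `(k₁, k₀)` of the smaller one and their difference minus one. -/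
noncomputable def powAddPowCount (p n : ℕ) : ℕ :=
  {kk : ℕ × ℕ | n = p ^ kk.1 + p ^ (kk.1 + kk.2 + 1)}.ncard

section Counts

variable {p n : ℕ}

theorem powCount_one (hp : 1 < p) : powCount p 1 = 1 := by
  have hzero : {k : ℕ | 1 = p ^ k} = {0} := by
    ext k
    simp [eq_comm (a := 1), hp.ne']
  rw [powCount, hzero, Set.ncard_singleton]

theorem powCount_eq_posPowCount (hn : n ≠ 1) : powCount p n = posPowCount p n := by
  refine (Set.ncard_preimage_of_injective_subset_range Nat.succ_injective ?_).symm
  rintro (_ | k) hk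
  · exact absurd (hk.trans (pow_zero p)) hn
  · exact ⟨k, rfl⟩

theorem posPowCount_zero (hp : 0 < p) : posPowCount p 0 = 0 := by
  have hempty : {k : ℕ | 0 = p ^ (k + 1)} = ∅ :=
    Set.eq_empty_of_forall_notMem fun k ↦ (pow_pos hp (k + 1)).ne
  rw [posPowCount, hempty, Set.ncard_empty]

theorem posPowCount_eq_zero_of_not_dvd (hn : ¬p ∣ n) : posPowCount p n = 0 := by
  have hempty : {k : ℕ | n = p ^ (k + 1)} = ∅ :=
    Set.eq_empty_of_forall_notMem fun k hk ↦ hn (hk ▸ dvd_pow_self p k.succ_ne_zero)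
  rw [posPowCount, hempty, Set.ncard_empty]

theorem posPowCount_mul (hp : 0 < p) (n : ℕ) : posPowCount p (p * n) = powCount p n := by
  simp only [posPowCount, powCount, pow_succ', Nat.mul_right_inj hp.ne']

theorem powAddPowCount_mul (hp : 1 < p) (n : ℕ) :
    powAddPowCount p (p * n) = powAddPowCount p n := by
  let shift : ℕ × ℕ → ℕ × ℕ := Prod.map Nat.succ id
  let solutions (n : ℕ) : Set (ℕ × ℕ) := {kk | n = p ^ kk.1 + p ^ (kk.1 + kk.2 + 1)}
  have hshift : shift.Injective := Nat.succ_injective.prodMap Function.injective_id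
  have hrange : solutions (p * n) ⊆ Set.range shift := by
    rintro ⟨_ | k₁, k₀⟩ hk
    · have hdvd : p ∣ 1 + p ^ (0 + k₀ + 1) := ⟨n, hk.symm⟩
      have hone : p ∣ 1 := (Nat.dvd_add_left (dvd_pow_self p (Nat.succ_ne_zero _))).mp hdvd
      exact absurd (Nat.dvd_one.mp hone) hp.ne'
    · exact ⟨(k₁, k₀), rfl⟩
  have hpreimage : shift ⁻¹' solutions (p * n) = solutions n := by
    ext ⟨k₁, k₀⟩
    have hfactor : p ^ (k₁ + 1) + p ^ (k₁ + 1 + k₀ + 1) = p * (p ^ k₁ + p ^ (k₁ + k₀ + 1)) := by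
      ring
    change p * n = p ^ (k₁ + 1) + p ^ (k₁ + 1 + k₀ + 1) ↔ n = p ^ k₁ + p ^ (k₁ + k₀ + 1)
    rw [hfactor, Nat.mul_right_inj (by omega)]
  calc
    (solutions (p * n)).ncard = (shift ⁻¹' solutions (p * n)).ncard :=
      (Set.ncard_preimage_of_injective_subset_range hshift hrange).symm
    _ = (solutions n).ncard := by rw [hpreimage]

theorem powAddPowCount_add_one_of_not_dvd (hn : ¬p ∣ n + 1) :
    powAddPowCount p (n + 1) = posPowCount p n := by
  let solutions : Set (ℕ × ℕ) := {kk | n + 1 = p ^ kk.1 + p ^ (kk.1 + kk.2 + 1)}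
  have hrange : solutions ⊆ Set.range (Prod.mk 0) := by
    rintro ⟨_ | k₁, k₀⟩ hk
    · exact ⟨k₀, rfl⟩
    · have hdvd : p ∣ p ^ (k₁ + 1) + p ^ (k₁ + 1 + k₀ + 1) :=
        dvd_add (dvd_pow_self p (Nat.succ_ne_zero _)) (dvd_pow_self p (Nat.succ_ne_zero _))
      exact absurd (hk ▸ hdvd) hn
  have hpreimage : Prod.mk 0 ⁻¹' solutions = {k : ℕ | n = p ^ (k + 1)} := by
    ext k
    change n + 1 = p ^ 0 + p ^ (0 + k + 1) ↔ n = p ^ (k + 1)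
    rw [pow_zero, zero_add, add_comm 1, add_left_inj]
  calc
    solutions.ncard = (Prod.mk 0 ⁻¹' solutions).ncard :=
      (Set.ncard_preimage_of_injective_subset_range (Prod.mk_right_injective 0) hrange).symm
    _ = posPowCount p n := by rw [hpreimage, posPowCount]

theorem powCount_mul_add_one_add_posPowCount (hp : 1 < p) (q : ℕ) :
    powCount p (p * q + 1) + posPowCount p (q + 1) = powCount p (q + 1) := by
  have not_dvd_mul_add_one (r : ℕ) : ¬p ∣ p * r + 1 := by
    rw [Nat.dvd_add_right (dvd_mul_right p r), Nat.dvd_one]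
    exact hp.ne'
  rcases eq_or_ne q 0 with rfl | hq
  · have hpos : posPowCount p 1 = 0 := posPowCount_eq_zero_of_not_dvd (not_dvd_mul_add_one 0)
    simp only [mul_zero, zero_add, hpos, add_zero]
  · have hpq : p * q + 1 ≠ 1 := by simp [hq, hp.pos.ne']
    rw [powCount_eq_posPowCount hpq, posPowCount_eq_zero_of_not_dvd (not_dvd_mul_add_one q),
      zero_add, powCount_eq_posPowCount (by simpa using hq)]

end Counts

section Recursion

variable {p d q : ℕ}

theorem e_add_one_add_one_of_dvd (h : p ∣ d + 1) (m : ℕ) : e p (d + 1) (m + 1) = e p d m := by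
  rw [e.eq_def]
  exact dif_pos (Nat.mod_eq_zero_of_dvd h)

theorem e_eq_zero_of_not_dvd (hd : ¬p ∣ d) (hd' : ¬p ∣ d + 1) (m : ℕ) : e p d m = 0 := by
  cases d with
  | zero => exact absurd (dvd_zero p) hd
  | succ d =>
    rw [e.eq_def]
    exact (dif_neg (mt Nat.dvd_of_mod_eq_zero hd)).trans
      (dif_neg (mt Nat.dvd_of_mod_eq_zero hd'))

theorem e_zero_eq_zero_of_not_dvd (hd : d ≠ 0) (h : ¬p ∣ d + 1) : e p d 0 = 0 := by
  by_cases hdvd : p ∣ d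
  · obtain ⟨d, rfl⟩ := Nat.exists_eq_add_one_of_ne_zero hd
    rw [e, dif_pos (Nat.mod_eq_zero_of_dvd hdvd)]
  · exact e_eq_zero_of_not_dvd hdvd h 0

theorem e_of_add_one_eq_mul (hp : 1 < p) (h : d + 1 = p * (q + 1)) (m : ℕ) :
    e p d m = (match m with | 0 => 0 | m + 1 => e p (p * q) m) + e p q m := by
  have hd : d ≠ 0 := by nlinarith
  obtain ⟨d, rfl⟩ := Nat.exists_eq_add_one_of_ne_zero hd
  have hdvd : p ∣ d + 2 := ⟨q + 1, h⟩
  have hndvd : ¬p ∣ d + 1 := fun hd ↦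
    hp.ne' (Nat.dvd_one.mp ((Nat.dvd_add_right hd).mp hdvd))
  have hsub : d + 2 - p = p * q := by rw [h, mul_add_one, Nat.add_sub_cancel]
  have hdiv : (d + 2) / p - 1 = q := by
    rw [h, Nat.mul_div_cancel_left _ hp.pos, Nat.add_sub_cancel]
  rw [e.eq_def]
  dsimp only
  rw [dif_neg (mt Nat.dvd_of_mod_eq_zero hndvd), dif_pos (Nat.mod_eq_zero_of_dvd hdvd), hsub, hdiv]

@[elab_as_elim]
theorem add_one_eq_mul_induction {motive : ℕ → Prop} (hp : 1 < p)
    (not_dvd : ∀ d, ¬p ∣ d + 1 → motive d)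
    (mul : ∀ d q, d + 1 = p * (q + 1) → motive q → motive d) (d : ℕ) : motive d := by
  induction d using Nat.strong_induction_on with
  | _ d ih =>
    by_cases hdvd : p ∣ d + 1
    · obtain ⟨_ | q, h⟩ := hdvd
      · exact absurd h d.succ_ne_zero
      · exact mul d q h (ih q (by nlinarith))
    · exact not_dvd d hdvd

theorem e_zero_eq_powCount (hp : 1 < p) (d : ℕ) : e p d 0 = powCount p (d + 1) := by
  induction d using add_one_eq_mul_induction hp with
  | not_dvd d h =>
    rcases eq_or_ne d 0 with rfl | hd
    · rw [e, zero_add, powCount_one hp]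
    · rw [e_zero_eq_zero_of_not_dvd hd h, powCount_eq_posPowCount (by simpa using hd),
        posPowCount_eq_zero_of_not_dvd h]
  | mul d q h ih =>
    have hne : d + 1 ≠ 1 := by nlinarith
    calc
      e p d 0 = 0 + e p q 0 := e_of_add_one_eq_mul hp h 0
      _ = posPowCount p (p * (q + 1)) := by rw [zero_add, ih, posPowCount_mul hp.pos]
      _ = powCount p (d + 1) := by rw [← h, powCount_eq_posPowCount hne]

theorem e_one_eq_posPowCount_of_not_dvd (hp : 1 < p) (h : ¬p ∣ d + 1) :
    e p d 1 = posPowCount p d := by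
  by_cases hdvd : p ∣ d
  · cases d with
    | zero => rw [e, posPowCount_zero hp.pos]
    | succ d =>
      have hne : d + 1 ≠ 1 := fun hd ↦ hp.ne' (Nat.dvd_one.mp (hd ▸ hdvd))
      rw [e_add_one_add_one_of_dvd hdvd, e_zero_eq_powCount hp, powCount_eq_posPowCount hne]
  · rw [e_eq_zero_of_not_dvd hdvd h, posPowCount_eq_zero_of_not_dvd hdvd]

end Recursion

theorem e_one_eq_general (p : ℕ) (hp : 1 < p) (d : ℕ) :
    e p d 1 =
      {k : ℕ | d + 1 = p ^ (k + 1)}.ncard +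
        {kk : ℕ × ℕ | d + 1 = p ^ kk.1 + p ^ (kk.1 + kk.2 + 1)}.ncard := by
  change e p d 1 = posPowCount p (d + 1) + powAddPowCount p (d + 1)
  induction d using add_one_eq_mul_induction hp with
  | not_dvd d h =>
    rw [e_one_eq_posPowCount_of_not_dvd hp h, posPowCount_eq_zero_of_not_dvd h,
      powAddPowCount_add_one_of_not_dvd h, zero_add]
  | mul d q h ih =>
    calc
      e p d 1 = e p (p * q) 0 + e p q 1 := e_of_add_one_eq_mul hp h 1
      _ = powCount p (p * q + 1) + (posPowCount p (q + 1) + powAddPowCount p (q + 1)) := by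
        rw [e_zero_eq_powCount hp, ih]
      _ = powCount p (q + 1) + powAddPowCount p (q + 1) := by
        rw [← add_assoc, powCount_mul_add_one_add_posPowCount hp]
      _ = posPowCount p (d + 1) + powAddPowCount p (d + 1) := by
        rw [h, posPowCount_mul hp.pos, powAddPowCount_mul hp]

/-- The coefficient form of
`s·h₁(s) = ∑_{k₁ ≥ 0} s^{p^{k₁+1}} + ∑_{k₁,k₀ ≥ 0} s^{p^{k₁} + p^{k₁+k₀+1}}`:
for every `d`, `e d 1` equals the number of `k` with `d + 1 = p^{k+1}` plus the number
of pairs `(k₁, k₀)` with `d + 1 = p^{k₁} + p^{k₁+k₀+1}`. -/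
theorem e_one_eq (p : ℕ) (hp : p.Prime) (hodd : Odd p) (d : ℕ) :
    e p d 1 =
      {k : ℕ | d + 1 = p ^ (k + 1)}.ncard +
        {kk : ℕ × ℕ | d + 1 = p ^ kk.1 + p ^ (kk.1 + kk.2 + 1)}.ncard :=
  e_one_eq_general p hp.one_lt d
end

section
/- Let L : ℕ → Finset ℕ be the recursively defined family of finite sets (see context). Then for every t ≥ 1: L (2t − 1) = {t, t+1, …, 2t} (the integer interval [t, 2t]) and L (2t) = {t+1, t+2, …, 2t+1} (the integer interval [t+1, 2t+1]). -/
/-- The sets of lengths of labels: `L 0 = {1}`, `L 1 = {1, 2}`, and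
`L (n+2) = {x + 1 : x ∈ L (n+1) ∪ L n}`. -/
def L : ℕ → Finset ℕ
  | 0 => {1}
  | 1 => {1, 2}
  | n + 2 => (L (n + 1) ∪ L n).image (· + 1)

theorem Icc_union_Icc_eq_Icc_min_max {α : Type*} [LinearOrder α] [LocallyFiniteOrder α]
    {a b c d : α} (hcb : c ≤ b) (had : a ≤ d) :
    Finset.Icc a b ∪ Finset.Icc c d = Finset.Icc (min a c) (max b d) := by
  simpa only [← Finset.coe_inj, Finset.coe_union, Finset.coe_Icc] using Set.Icc_union_Icc' hcb had

theorem L_eq_Icc_div_two (n : ℕ) : L n = Finset.Icc (n / 2 + 1) (n + 1) := by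
  induction n using Nat.twoStepInduction with
  | zero => rfl
  | one => rfl
  | more n ih_n ih_succ =>
    have min_left : min ((n + 1) / 2 + 1) (n / 2 + 1) = n / 2 + 1 := by lia
    have max_right : max (n + 2) (n + 1) = n + 2 := by lia
    calc L (n + 2)
      _ = (Finset.Icc ((n + 1) / 2 + 1) (n + 2) ∪ Finset.Icc (n / 2 + 1) (n + 1)).image
            (· + 1) := by
          rw [L, ih_succ, ih_n]
      _ = (Finset.Icc (n / 2 + 1) (n + 2)).image (· + 1) := by
          rw [Icc_union_Icc_eq_Icc_min_max (by lia) (by lia), min_left, max_right]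
      _ = Finset.Icc (n / 2 + 1 + 1) (n + 2 + 1) := Finset.image_add_right_Icc ..
      _ = Finset.Icc ((n + 2) / 2 + 1) (n + 2 + 1) := by
          rw [Nat.add_div_right n two_pos]

/-- For every `t ≥ 1`, `L (2t − 1) = {t, t+1, …, 2t}` and `L (2t) = {t+1, …, 2t+1}`. -/
theorem L_eq_Icc (t : ℕ) (ht : 1 ≤ t) :
    L (2 * t - 1) = Finset.Icc t (2 * t) ∧ L (2 * t) = Finset.Icc (t + 1) (2 * t + 1) := by
  have half_odd : (2 * t - 1) / 2 + 1 = t := by lia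
  have half_even : 2 * t / 2 = t := by lia
  have succ_pred : 2 * t - 1 + 1 = 2 * t := by lia
  exact ⟨by rw [L_eq_Icc_div_two, half_odd, succ_pred], by rw [L_eq_Icc_div_two, half_even]⟩
end

section
/- Let N : ℕ → ℕ → ℕ be the recursively defined double sequence (see context). Then for all n ∈ ℕ and all l with l ≤ n + 1, N n l = binomial(l, n + 1 − l); moreover N n l = 0 whenever l > n + 1. In particular there is exactly one label of length n + 1, and the number of labels of length n − i is binomial(n − i, i + 1). -/
/-- The number `N n l` of labels of length `l` in the expression for `s·hₙ(s)`:
`N 0 l = 1` iff `l = 1`; `N 1 l = 1` iff `l ∈ {1, 2}`; `N (n+2) 0 = 0` and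
`N (n+2) (l+1) = N (n+1) l + N n l`. -/
def Nlab : ℕ → ℕ → ℕ
  | 0, l => if l = 1 then 1 else 0
  | 1, l => if l = 1 ∨ l = 2 then 1 else 0
  | n + 2, 0 => 0
  | n + 2, l + 1 => Nlab (n + 1) l + Nlab n l

theorem Nlab_zero_right (n : ℕ) : Nlab n 0 = 0 := by
  rcases n with _ | _ | _ <;> simp [Nlab]

theorem Nlab_add_two_succ (n l : ℕ) : Nlab (n + 2) (l + 1) = Nlab (n + 1) l + Nlab n l := by
  rw [Nlab]

theorem Nlab_eq_zero_of_lt {n l : ℕ} (h : n + 1 < l) : Nlab n l = 0 := by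
  induction n using Nat.twoStepInduction generalizing l with
  | zero => rw [Nlab, if_neg (by lia)]
  | one => rw [Nlab, if_neg (by lia)]
  | more _ ih_n ih_succ =>
    obtain ⟨l, rfl⟩ := Nat.exists_eq_add_one_of_ne_zero (by lia : l ≠ 0)
    rw [Nlab_add_two_succ, ih_succ (by lia), ih_n (by lia)]

-- In terms of `k = n + 1 - l`, the recursion is Pascal's rule: passing from `Nlab (n + 2) (l + 1)`
-- to `Nlab (n + 1) l` keeps `k`, and passing to `Nlab n l` lowers it by one.
theorem Nlab_eq_choose_of_add_eq {n l k : ℕ} (h : l + k = n + 1) : Nlab n l = l.choose k := by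
  induction n using Nat.twoStepInduction generalizing l k with
  | zero =>
    obtain ⟨rfl, rfl⟩ | ⟨rfl, rfl⟩ := Nat.add_eq_one_iff.mp h <;> simp [Nlab]
  | one =>
    obtain ⟨rfl, rfl⟩ | ⟨rfl, rfl⟩ | ⟨rfl, rfl⟩ := Nat.add_eq_two_iff.mp h <;> simp [Nlab]
  | more n ih_n ih_succ =>
    cases l with
    | zero => rw [Nlab_zero_right, Nat.choose_eq_zero_of_lt (by lia)]
    | succ l =>
      cases k with
      | zero =>
        rw [Nlab_add_two_succ, ih_succ (k := 0) (by lia), Nlab_eq_zero_of_lt (by lia),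
          Nat.choose_zero_right, Nat.choose_zero_right]
      | succ k =>
        calc Nlab (n + 2) (l + 1)
          _ = Nlab (n + 1) l + Nlab n l := Nlab_add_two_succ n l
          _ = l.choose (k + 1) + l.choose k := by
            rw [ih_succ (k := k + 1) (by lia), ih_n (k := k) (by lia)]
          _ = (l + 1).choose (k + 1) := by rw [Nat.choose_succ_succ', Nat.add_comm]

/-- For all `n` and `l ≤ n + 1`, `N n l = C(l, n + 1 − l)`, and `N n l = 0` for
`l > n + 1`.  In particular there is exactly one label of length `n + 1`, and the
number of labels of length `n − i` is `C(n − i, i + 1)`. -/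
theorem Nlab_eq_choose (n l : ℕ) :
    (l ≤ n + 1 → Nlab n l = Nat.choose l (n + 1 - l)) ∧ (n + 1 < l → Nlab n l = 0) :=
  ⟨fun h => Nlab_eq_choose_of_add_eq (Nat.add_sub_of_le h), Nlab_eq_zero_of_lt⟩
end

section
/- Let n, a be natural numbers. (i) If (a : ℝ) < (1/2 − √5/10)·n − 1, then binomial(n − a + 1, a) ≤ binomial(n − a, a + 1). (ii) If (1/2 − √5/10)·n < (a : ℝ) and 2a ≤ n, then binomial(n − a, a + 1) ≤ binomial(n − a + 1, a). -/
/-!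
With `m = n - a`, the ratio of `C(m, a + 1)` to `C(m + 1, a)` is
`(m + 1 - a) (m - a) / ((a + 1) (m + 1))`. In terms of `n` and `a`, comparing this ratio with `1`
is a quadratic inequality in `a` of discriminant `5 (n + 2) ^ 2 + 4`. The larger root exceeds
`n / 2`, so for `2 a ≤ n` the comparison is decided by the smaller root, which lies between
`(1 / 2 - √5 / 10) n - 1` and `(1 / 2 - √5 / 10) n`.
-/

theorem choose_succ_right_mul_eq_choose_succ_left_mul (m a : ℕ) :
    m.choose (a + 1) * ((a + 1) * (m + 1)) = (m + 1).choose a * ((m + 1 - a) * (m - a)) :=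
  calc m.choose (a + 1) * ((a + 1) * (m + 1))
      = m.choose (a + 1) * (a + 1) * (m + 1) := by ring
    _ = m.choose a * (m + 1) * (m - a) := by rw [Nat.choose_succ_right_eq]; ring
    _ = (m + 1).choose a * ((m + 1 - a) * (m - a)) := by rw [Nat.choose_mul_succ_eq]; ring

theorem choose_succ_left_le_choose_succ_right_iff {m a : ℕ} (h : a ≤ m + 1) :
    (m + 1).choose a ≤ m.choose (a + 1) ↔ (a + 1) * (m + 1) ≤ (m + 1 - a) * (m - a) := by
  have hweight : 0 < (a + 1) * (m + 1) := by positivity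
  rw [← Nat.mul_le_mul_right_iff hweight, choose_succ_right_mul_eq_choose_succ_left_mul,
    Nat.mul_le_mul_left_iff (Nat.choose_pos h)]

theorem choose_succ_right_le_choose_succ_left_iff {m a : ℕ} (h : a ≤ m + 1) :
    m.choose (a + 1) ≤ (m + 1).choose a ↔ (m + 1 - a) * (m - a) ≤ (a + 1) * (m + 1) := by
  have hweight : 0 < (a + 1) * (m + 1) := by positivity
  rw [← Nat.mul_le_mul_right_iff hweight, choose_succ_right_mul_eq_choose_succ_left_mul,
    Nat.mul_le_mul_left_iff (Nat.choose_pos h)]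

/-- The position at which the anti-diagonal entries `C(n + 1 - x, x)` stop increasing: the smaller
root of `(n - 2 x + 1) (n - 2 x) = (x + 1) (n - x + 1)` as an equation in `x`. Both variables
are real, so that the root can be compared with linear functions of `n`. -/
noncomputable def antidiagonalPeak (n : ℝ) : ℝ :=
  (5 * n + 2 - √(5 * (n + 2) ^ 2 + 4)) / 10

theorem le_antidiagonalPeak_iff {n x : ℝ} (h : 2 * x ≤ n) :
    x ≤ antidiagonalPeak n ↔ (x + 1) * (n - x + 1) ≤ (n - 2 * x + 1) * (n - 2 * x) :=
  calc x ≤ antidiagonalPeak n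
      ↔ √(5 * (n + 2) ^ 2 + 4) ≤ 5 * n + 2 - 10 * x := by
        unfold antidiagonalPeak; constructor <;> intro <;> linarith
    _ ↔ 5 * (n + 2) ^ 2 + 4 ≤ (5 * n + 2 - 10 * x) ^ 2 := Real.sqrt_le_left (by linarith)
    _ ↔ (x + 1) * (n - x + 1) ≤ (n - 2 * x + 1) * (n - 2 * x) := by
        constructor <;> intro <;> linarith

theorem antidiagonalPeak_le_iff {n x : ℝ} (h : 2 * x ≤ n) :
    antidiagonalPeak n ≤ x ↔ (n - 2 * x + 1) * (n - 2 * x) ≤ (x + 1) * (n - x + 1) :=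
  calc antidiagonalPeak n ≤ x
      ↔ 5 * n + 2 - 10 * x ≤ √(5 * (n + 2) ^ 2 + 4) := by
        unfold antidiagonalPeak; constructor <;> intro <;> linarith
    _ ↔ (5 * n + 2 - 10 * x) ^ 2 ≤ 5 * (n + 2) ^ 2 + 4 := Real.le_sqrt' (by linarith)
    _ ↔ (n - 2 * x + 1) * (n - 2 * x) ≤ (x + 1) * (n - x + 1) := by
        constructor <;> intro <;> linarith

theorem sub_one_le_antidiagonalPeak {n : ℝ} (hn : 0 ≤ n) :
    (1 / 2 - √5 / 10) * n - 1 ≤ antidiagonalPeak n := by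
  have hsq : √5 ^ 2 = 5 := Real.sq_sqrt (by norm_num)
  have hone : 1 ≤ √5 := Real.one_le_sqrt.mpr (by norm_num)
  have hroot : √(5 * (n + 2) ^ 2 + 4) ≤ √5 * n + 12 := by
    refine Real.sqrt_le_iff.mpr ⟨by positivity, ?_⟩
    calc 5 * (n + 2) ^ 2 + 4 = 5 * n ^ 2 + 20 * n + 24 := by ring
      _ ≤ 5 * n ^ 2 + 24 * (√5 * n) + 144 := by linarith [le_mul_of_one_le_left hn hone]
      _ = (√5 * n + 12) ^ 2 := by linear_combination -n ^ 2 * hsq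
  unfold antidiagonalPeak
  linarith

theorem antidiagonalPeak_le {n : ℝ} (hn : 0 ≤ n) :
    antidiagonalPeak n ≤ (1 / 2 - √5 / 10) * n := by
  have hsq : √5 ^ 2 = 5 := Real.sq_sqrt (by norm_num)
  have hfive : √5 ≤ 5 := Real.sqrt_le_self_iff.mpr (by norm_num)
  have hroot : √5 * n + 2 ≤ √(5 * (n + 2) ^ 2 + 4) := by
    refine Real.le_sqrt_of_sq_le ?_
    calc (√5 * n + 2) ^ 2 = 5 * n ^ 2 + 4 * (√5 * n) + 4 := by linear_combination n ^ 2 * hsq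
      _ ≤ 5 * n ^ 2 + 20 * n + 24 := by linarith [mul_le_mul_of_nonneg_right hfive hn]
      _ = 5 * (n + 2) ^ 2 + 4 := by ring
  unfold antidiagonalPeak
  linarith

theorem choose_antidiagonal_comparison_general {n a : ℕ} (h : 2 * a ≤ n) :
    ((n - a + 1).choose a ≤ (n - a).choose (a + 1) ↔ (a : ℝ) ≤ antidiagonalPeak n) ∧
    ((n - a).choose (a + 1) ≤ (n - a + 1).choose a ↔ antidiagonalPeak n ≤ a) := by
  have hreal : 2 * (a : ℝ) ≤ n := by exact_mod_cast h
  have hleft : (((a + 1) * (n - a + 1) : ℕ) : ℝ) = (a + 1) * (n - a + 1) := by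
    push_cast [show a ≤ n by lia]; ring
  have hright : (((n - a + 1 - a) * (n - a - a) : ℕ) : ℝ) = (n - 2 * a + 1) * (n - 2 * a) := by
    push_cast [show a ≤ n by lia, show a ≤ n - a by lia, show a ≤ n - a + 1 by lia]; ring
  rw [choose_succ_left_le_choose_succ_right_iff (by lia),
    choose_succ_right_le_choose_succ_left_iff (by lia), le_antidiagonalPeak_iff hreal,
    antidiagonalPeak_le_iff hreal, ← hleft, ← hright, Nat.cast_le, Nat.cast_le]
  exact ⟨Iff.rfl, Iff.rfl⟩

/-- Comparison of consecutive binomial coefficients along an anti-diagonal: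
(i) if `a < (1/2 − √5/10)·n − 1` then `C(n−a+1, a) ≤ C(n−a, a+1)`;
(ii) if `(1/2 − √5/10)·n < a` and `2a ≤ n` then `C(n−a, a+1) ≤ C(n−a+1, a)`. -/
theorem choose_antidiagonal_comparison (n a : ℕ) :
    ((a : ℝ) < (1 / 2 - Real.sqrt 5 / 10) * n - 1 →
      Nat.choose (n - a + 1) a ≤ Nat.choose (n - a) (a + 1)) ∧
    ((1 / 2 - Real.sqrt 5 / 10) * n < (a : ℝ) ∧ 2 * a ≤ n →
      Nat.choose (n - a) (a + 1) ≤ Nat.choose (n - a + 1) a) := by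
  refine ⟨fun hlt ↦ ?_, fun ⟨hlt, hle⟩ ↦ ?_⟩
  · have hle : 2 * a ≤ n := by
      have hreal : 2 * (a : ℝ) ≤ n := by linarith [show 0 ≤ √5 * n by positivity]
      exact_mod_cast hreal
    exact (choose_antidiagonal_comparison_general hle).1.mpr
      (hlt.le.trans (sub_one_le_antidiagonalPeak n.cast_nonneg))
  · exact (choose_antidiagonal_comparison_general hle).2.mpr
      ((antidiagonalPeak_le n.cast_nonneg).trans hlt.le)
end

section
/- Let p be an odd prime and e : ℕ → ℕ → ℕ the recursively defined sequence (see context). There exist a real number c > 1 and a natural number N₀ such that for every n ≥ N₀ there exists d ∈ ℕ with (e d n : ℝ) ≥ c^n. That is, one may find weights aₙ = 2dₙ such that dim Ext^n(k, Δ(aₙ)) grows exponentially in n. -/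
/-!
If `p ∣ d`, the recursion at `(d + 1) * p` gives
`e p d m + e p d (m + 1) ≤ e p ((d + 1) * p) (m + 2)` and
`e p d m ≤ e p ((d + 1) * p) (m + 1)`. In terms of Poincaré series, passing from `d` to
`(d + 1) * p` multiplies by at least `t + t²` coefficientwise. Doing this twice multiplies by at
least `2t³`, so the dimension can be doubled each time the degree increases by `3`.
-/

section Recursion

variable {p : ℕ}

theorem e_zero_zero : e p 0 0 = 1 := by
  rw [e]

theorem e_succ_zero_of_dvd {d : ℕ} (h : p ∣ d + 1) : e p (d + 1) 0 = 0 := by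
  rw [e, dif_pos (Nat.mod_eq_zero_of_dvd h)]

theorem e_succ_succ_of_dvd {d : ℕ} (h : p ∣ d + 1) (m : ℕ) :
    e p (d + 1) (m + 1) = e p d m := by
  rw [e, dif_pos (Nat.mod_eq_zero_of_dvd h)]

theorem e_succ_mul_succ (hp : 0 < p) (k m : ℕ) :
    e p ((k + 1) * p) (m + 1) = e p ((k + 1) * p - 1) m := by
  have hd : (k + 1) * p - 1 + 1 = (k + 1) * p := Nat.sub_add_cancel (Nat.mul_pos k.succ_pos hp)
  simpa only [hd] using
    e_succ_succ_of_dvd (d := (k + 1) * p - 1) (hd ▸ dvd_mul_left p (k + 1)) m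

theorem e_succ_mul_sub_one (hp : 2 ≤ p) (k m : ℕ) :
    e p ((k + 1) * p - 1) m = (if 1 ≤ m then e p (k * p) (m - 1) else 0) + e p k m := by
  obtain ⟨d, hd⟩ : ∃ d, (k + 1) * p = d + 2 :=
    Nat.exists_eq_add_of_le' (hp.trans (Nat.le_mul_of_pos_left p k.succ_pos))
  have h_dvd : p ∣ d + 2 := hd ▸ dvd_mul_left p (k + 1)
  have h_not_dvd : ¬ p ∣ d + 1 := fun h ↦
    absurd (Nat.dvd_one.mp ((Nat.dvd_add_right h).mp h_dvd)) (by omega)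
  have h_sub : d + 2 - p = k * p := by rw [← hd, add_one_mul, Nat.add_sub_cancel]
  have h_div : (d + 2) / p - 1 = k := by
    rw [← hd, Nat.mul_div_cancel _ (by omega), Nat.add_sub_cancel]
  rw [hd, show d + 2 - 1 = d + 1 from rfl]
  cases m <;>
    rw [e, dif_neg (mt Nat.dvd_of_mod_eq_zero h_not_dvd), dif_pos (Nat.mod_eq_zero_of_dvd h_dvd),
      h_div] <;>
    simp [h_sub]

end Recursion

section Growth

variable {p : ℕ} (hp : 2 ≤ p)
include hp

theorem e_le_e_succ_mul_sub_one (k m : ℕ) : e p k m ≤ e p ((k + 1) * p - 1) m := by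
  rw [e_succ_mul_sub_one hp]
  exact Nat.le_add_left _ _

theorem e_le_e_succ_mul_succ (k m : ℕ) : e p k m ≤ e p ((k + 1) * p) (m + 1) := by
  rw [e_succ_mul_succ (by omega)]
  exact e_le_e_succ_mul_sub_one hp k m

theorem e_le_e_mul_of_dvd {d : ℕ} (hd : p ∣ d) (m : ℕ) : e p d m ≤ e p (d * p) m := by
  rcases d, m with ⟨_ | d, _ | m⟩
  · rw [zero_mul]
  · rw [zero_mul]
  · simp [e_succ_zero_of_dvd hd]
  · rw [e_succ_succ_of_dvd hd]
    exact e_le_e_succ_mul_succ hp d m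

theorem e_add_e_succ_le_of_dvd {d : ℕ} (hd : p ∣ d) (m : ℕ) :
    e p d m + e p d (m + 1) ≤ e p ((d + 1) * p) (m + 2) :=
  calc
    e p d m + e p d (m + 1) ≤ e p (d * p) m + e p d (m + 1) := by
      gcongr
      exact e_le_e_mul_of_dvd hp hd m
    _ = e p ((d + 1) * p - 1) (m + 1) := by simp [e_succ_mul_sub_one hp]
    _ = e p ((d + 1) * p) (m + 2) := (e_succ_mul_succ (by omega) d (m + 1)).symm

theorem two_mul_e_le_of_dvd {d : ℕ} (hd : p ∣ d) (m : ℕ) :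
    2 * e p d m ≤ e p (((d + 1) * p + 1) * p) (m + 3) :=
  calc
    2 * e p d m = e p d m + e p d m := two_mul _
    _ ≤ e p ((d + 1) * p) (m + 1) + e p ((d + 1) * p) (m + 2) :=
      add_le_add (e_le_e_succ_mul_succ hp d m)
        (le_of_add_le_left (e_add_e_succ_le_of_dvd hp hd m))
    _ ≤ e p (((d + 1) * p + 1) * p) (m + 3) :=
      e_add_e_succ_le_of_dvd hp (dvd_mul_left p (d + 1)) (m + 1)

theorem exists_dvd_two_pow_div_three_le_e (n : ℕ) : ∃ d, p ∣ d ∧ 2 ^ (n / 3) ≤ e p d n := by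
  induction n using Nat.strong_induction_on with
  | _ n ih =>
    match n with
    | 0 => exact ⟨0, dvd_zero p, e_zero_zero.ge⟩
    | 1 => exact ⟨_, dvd_mul_left p (0 + 1), e_zero_zero.ge.trans (e_le_e_succ_mul_succ hp 0 0)⟩
    | 2 =>
      exact ⟨_, dvd_mul_left p (0 + 1),
        e_zero_zero.ge.trans (le_of_add_le_left (e_add_e_succ_le_of_dvd hp (dvd_zero p) 0))⟩
    | n + 3 =>
      obtain ⟨d, hd, h_le⟩ := ih n (by omega)
      refine ⟨_, dvd_mul_left p ((d + 1) * p + 1), ?_⟩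
      calc
        2 ^ ((n + 3) / 3) = 2 * 2 ^ (n / 3) := by
          rw [Nat.add_div_right n three_pos, pow_succ']
        _ ≤ 2 * e p d n := Nat.mul_le_mul_left 2 h_le
        _ ≤ e p (((d + 1) * p + 1) * p) (n + 3) := two_mul_e_le_of_dvd hp hd n

end Growth

theorem exponential_growth_odd_p_general :
    ∃ c : ℝ, 1 < c ∧ ∃ N₀ : ℕ, ∀ p : ℕ, 2 ≤ p → ∀ n : ℕ, N₀ ≤ n →
      ∃ d : ℕ, c ^ n ≤ (e p d n : ℝ) := by
  refine ⟨11 / 10, by norm_num, 3, fun p hp n hn ↦ ?_⟩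
  obtain ⟨d, -, h_le⟩ := exists_dvd_two_pow_div_three_le_e hp n
  refine ⟨d, ?_⟩
  calc
    (11 / 10 : ℝ) ^ n ≤ (11 / 10) ^ (5 * (n / 3)) := pow_le_pow_right₀ (by norm_num) (by omega)
    _ = ((11 / 10) ^ 5) ^ (n / 3) := pow_mul _ _ _
    _ ≤ 2 ^ (n / 3) := by gcongr; norm_num
    _ ≤ e p d n := mod_cast h_le

/-- Exponential growth for odd `p`: there are `c > 1` and `N₀` such that for every
`n ≥ N₀` there is a weight `2d` with `dim Ext^n(k, Δ(2d)) = e p d n ≥ c^n`. -/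
theorem exponential_growth_odd_p (p : ℕ) (hp : p.Prime) (hodd : Odd p) :
    ∃ c : ℝ, 1 < c ∧ ∃ N₀ : ℕ, ∀ n : ℕ, N₀ ≤ n → ∃ d : ℕ, c ^ n ≤ (e p d n : ℝ) := by
  obtain ⟨c, hc, N₀, h⟩ := exponential_growth_odd_p_general
  exact ⟨c, hc, N₀, h p hp.two_le⟩
end

section
/- For every t ≥ 2: the number of multisets b of natural numbers with card b = 2t − 2 and ∑_{i ∈ b} 2^i = 2^t is at least 2^{t−2}, and the number of multisets b of natural numbers with card b = 2t − 1 and ∑_{i ∈ b} 2^i = 2^t is also at least 2^{t−2}. -/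
/-!
Adding two copies of `t - 1`, or a single `t`, to an expansion of `2^t` of length at least 2 gives
an expansion of `2^(t+1)`. The two kinds of result differ in whether `t` occurs, so the numbers of
expansions of `2^t` of lengths `r` and `r + 1` add up to at most the number of expansions of
`2^(t+1)` of length `r + 2`. For length `r + 3`, two copies of `t - 1` are added at length `r + 1`,
and length `r` needs an injection whose values either contain `t` or contain `t - 1` exactly once
(`lengthen`, available for `t ≥ 3`). At `r = 2t - 2`, either bound doubles `2^(t-2)`.
-/

open Set

theorem ncard_add_ncard_le_of_injOn {α β γ : Type*} {s : Set α} {t : Set β} {u : Set γ}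
    {f : α → γ} {g : β → γ} (hu : u.Finite) (hfu : MapsTo f s u) (hgu : MapsTo g t u)
    (hf : InjOn f s) (hg : InjOn g t) (hfg : ∀ a ∈ s, ∀ b ∈ t, f a ≠ g b) :
    s.ncard + t.ncard ≤ u.ncard := by
  have hdisj : Disjoint (f '' s) (g '' t) :=
    disjoint_image_image hfg
  calc s.ncard + t.ncard = (f '' s).ncard + (g '' t).ncard := by
        rw [hf.ncard_image, hg.ncard_image]
    _ = (f '' s ∪ g '' t).ncard :=
        (ncard_union_eq hdisj (hu.subset hfu.image_subset) (hu.subset hgu.image_subset)).symm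
    _ ≤ u.ncard := ncard_le_ncard (union_subset hfu.image_subset hgu.image_subset) hu

/-- The expansions of `N` of length `r`: the ways of writing `N` as an unordered sum of `r` powers
of two, encoded by the multiset of exponents. -/
def expansions (N r : ℕ) : Set (Multiset ℕ) :=
  {b | Multiset.card b = r ∧ (b.map fun i => 2 ^ i).sum = N}

section

variable {M N r s t i : ℕ} {b c : Multiset ℕ}

theorem mem_expansions :
    b ∈ expansions N r ↔ Multiset.card b = r ∧ (b.map fun i => 2 ^ i).sum = N :=
  Iff.rfl

theorem add_mem_expansions (hb : b ∈ expansions M r) (hc : c ∈ expansions N s) :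
    b + c ∈ expansions (M + N) (r + s) := by
  rw [mem_expansions] at *
  rw [Multiset.card_add, Multiset.map_add, Multiset.sum_add, hb.1, hc.1, hb.2, hc.2]
  exact ⟨rfl, rfl⟩

theorem length_le_of_mem_expansions (hb : b ∈ expansions N r) : r ≤ N := by
  have h : ∀ x ∈ b.map fun i => 2 ^ i, 1 ≤ x := by
    simpa using fun i _ => Nat.one_le_two_pow
  simpa [hb.1, hb.2] using Multiset.card_nsmul_le_sum h

theorem two_pow_add_length_le (hb : b ∈ expansions N r) (hi : i ∈ b) : 2 ^ i + r ≤ N + 1 := by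
  obtain ⟨c, rfl⟩ := Multiset.exists_cons_of_mem hi
  obtain ⟨hcard, hsum⟩ := hb
  rw [Multiset.card_cons] at hcard
  rw [Multiset.map_cons, Multiset.sum_cons] at hsum
  have hc : Multiset.card c ≤ (c.map fun i => 2 ^ i).sum :=
    length_le_of_mem_expansions ⟨rfl, rfl⟩
  omega

theorem notMem_of_mem_expansions (hb : b ∈ expansions N r) (hr : 1 < r) (hN : N ≤ 2 ^ i) :
    i ∉ b := fun hi => by
  have := two_pow_add_length_le hb hi
  omega

theorem finite_expansions (N r : ℕ) : (expansions N r).Finite := by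
  refine (finite_Iic (r • Multiset.range (N + 1))).subset fun b hb => ?_
  rw [mem_Iic, Multiset.le_iff_count]
  intro i
  by_cases hi : i ∈ b
  · have hiN : i < N + 1 := by
      have := two_pow_add_length_le hb hi
      have := i.lt_two_pow_self
      omega
    rw [Multiset.count_nsmul, Multiset.count_eq_one_of_mem (Multiset.nodup_range _)
      (Multiset.mem_range.2 hiN), mul_one, ← hb.1]
    exact Multiset.count_le_card _ _
  · rw [Multiset.count_eq_zero.2 hi]
    exact Nat.zero_le _

theorem ncard_expansions_add_le_length_add_two (hr : 1 < r) (hN : N ≤ 2 ^ (t + 1)) :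
    (expansions N (r + 1)).ncard + (expansions N r).ncard ≤
      (expansions (N + 2 ^ (t + 1)) (r + 2)).ncard := by
  have hone : {t + 1} ∈ expansions (2 ^ (t + 1)) 1 := by simp [mem_expansions]
  have htwo : {t, t} ∈ expansions (2 ^ (t + 1)) 2 := by simp [mem_expansions, pow_succ, mul_two]
  refine ncard_add_ncard_le_of_injOn (f := (· + {t + 1})) (g := (· + {t, t}))
    (finite_expansions _ _) (fun b hb => add_mem_expansions (r := r + 1) hb hone)
    (fun b hb => add_mem_expansions hb htwo) (add_left_injective _).injOn
    (add_left_injective _).injOn fun b _ c hc hbc => ?_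
  have hmem : t + 1 ∈ c + {t, t} := hbc ▸ Multiset.mem_add.2 (.inr (Multiset.mem_singleton_self _))
  simp [notMem_of_mem_expansions hc hr hN] at hmem

/-- A map from expansions of `N` of length `r` to expansions of `N + 2^(t+3)` of length `r + 3`,
injective on those without `t + 3`. Its values avoid the multisets that omit `t + 3` and contain
`t + 2` at least twice. -/
def lengthen (t : ℕ) (b : Multiset ℕ) : Multiset ℕ :=
  if t + 2 ∈ b then b.erase (t + 2) + {t + 3, t + 1, t, t} else b + {t + 2, t + 1, t + 1}

theorem lengthen_of_mem (h : t + 2 ∈ b) :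
    lengthen t b = b.erase (t + 2) + {t + 3, t + 1, t, t} :=
  if_pos h

theorem lengthen_of_notMem (h : t + 2 ∉ b) : lengthen t b = b + {t + 2, t + 1, t + 1} :=
  if_neg h

theorem lengthen_mem_expansions (t : ℕ) (hb : b ∈ expansions N r) :
    lengthen t b ∈ expansions (N + 2 ^ (t + 3)) (r + 3) := by
  by_cases h : t + 2 ∈ b
  · rw [lengthen_of_mem h]
    obtain ⟨c, rfl⟩ := Multiset.exists_cons_of_mem h
    obtain ⟨rfl, rfl⟩ := hb
    rw [Multiset.erase_cons_head]
    constructor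
    · simp
    · simp only [Multiset.insert_eq_cons, Multiset.add_cons, Multiset.map_cons, pow_succ,
        Multiset.map_add, Multiset.map_singleton, Multiset.sum_cons, Multiset.sum_add,
        Multiset.sum_singleton]
      ring
  · rw [lengthen_of_notMem h]
    refine add_mem_expansions hb ⟨rfl, ?_⟩
    simp only [Multiset.insert_eq_cons, Multiset.map_cons, pow_succ, Multiset.map_singleton,
      Multiset.sum_cons, Multiset.sum_singleton]
    ring

theorem mem_lengthen_iff (hb : t + 3 ∉ b) : t + 3 ∈ lengthen t b ↔ t + 2 ∈ b := by
  by_cases h : t + 2 ∈ b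
  · simp [lengthen_of_mem h, h]
  · simp [lengthen_of_notMem h, h, hb]

theorem injOn_lengthen (t : ℕ) : InjOn (lengthen t) {b | t + 3 ∉ b} := by
  intro b hb c hc hbc
  have hiff : t + 2 ∈ b ↔ t + 2 ∈ c := by rw [← mem_lengthen_iff hb, hbc, mem_lengthen_iff hc]
  by_cases h : t + 2 ∈ b
  · rw [lengthen_of_mem h, lengthen_of_mem (hiff.1 h), add_left_inj] at hbc
    rw [← Multiset.cons_erase h, hbc, Multiset.cons_erase (hiff.1 h)]
  · rwa [lengthen_of_notMem h, lengthen_of_notMem (mt hiff.2 h), add_left_inj] at hbc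

theorem add_pair_ne_lengthen (hb : t + 3 ∉ b) (hc : t + 3 ∉ c) :
    b + {t + 2, t + 2} ≠ lengthen t c := by
  intro hbc
  have h : t + 2 ∉ c := by
    rw [← mem_lengthen_iff hc, ← hbc]
    simp [hb]
  have hcount := congrArg (Multiset.count (t + 2)) hbc
  simp [lengthen_of_notMem h, h] at hcount

theorem ncard_expansions_add_le_length_add_three (hr : 1 < r) (hN : N ≤ 2 ^ (t + 3)) :
    (expansions N (r + 1)).ncard + (expansions N r).ncard ≤
      (expansions (N + 2 ^ (t + 3)) (r + 3)).ncard := by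
  have hpair : {t + 2, t + 2} ∈ expansions (2 ^ (t + 3)) 2 := by
    simp [mem_expansions, pow_succ, mul_two]
  refine ncard_add_ncard_le_of_injOn (f := (· + {t + 2, t + 2})) (g := lengthen t)
    (finite_expansions _ _) (fun b hb => add_mem_expansions (r := r + 1) hb hpair)
    (fun b hb => lengthen_mem_expansions t hb) (add_left_injective _).injOn
    ((injOn_lengthen t).mono fun b hb => notMem_of_mem_expansions hb hr hN) fun b hb c hc => ?_
  exact add_pair_ne_lengthen (notMem_of_mem_expansions hb (by omega) hN)
    (notMem_of_mem_expansions hc hr hN)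

end

theorem two_le_ncard_expansions_eight_five : 2 ≤ (expansions 8 5).ncard := by
  rw [Nat.succ_le_iff, one_lt_ncard_iff (finite_expansions 8 5)]
  exact ⟨{1, 1, 1, 0, 0}, {2, 0, 0, 0, 0}, by simp [mem_expansions], by simp [mem_expansions],
    by decide⟩

/-- The inductive statement `(P_t)`: for `t ≥ 2`, the numbers of expansions of `2^t`
of lengths `2t − 2` and `2t − 1` (multisets `b` of naturals with the given cardinality
and `∑_{i ∈ b} 2^i = 2^t`) are each at least `2^{t−2}`. -/
theorem expansions_card_ge (t : ℕ) (ht : 2 ≤ t) :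
    2 ^ (t - 2) ≤
        {b : Multiset ℕ | Multiset.card b = 2 * t - 2 ∧ (b.map fun i => 2 ^ i).sum = 2 ^ t}.ncard ∧
      2 ^ (t - 2) ≤
        {b : Multiset ℕ | Multiset.card b = 2 * t - 1 ∧ (b.map fun i => 2 ^ i).sum = 2 ^ t}.ncard := by
  obtain ⟨s, rfl⟩ := Nat.exists_eq_add_of_le' ht
  change 2 ^ s ≤ (expansions (2 ^ (s + 2)) (2 * s + 2)).ncard ∧
    2 ^ s ≤ (expansions (2 ^ (s + 2)) (2 * s + 3)).ncard
  clear ht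
  induction s with
  | zero =>
    exact ⟨(ncard_pos (finite_expansions _ _)).2 ⟨{1, 1}, by simp [mem_expansions]⟩,
      (ncard_pos (finite_expansions _ _)).2 ⟨{1, 0, 0}, by simp [mem_expansions]⟩⟩
  | succ s ih =>
    obtain ⟨heven, hodd⟩ := ih
    rw [pow_succ 2 s, pow_succ 2 (s + 2), mul_two, mul_two]
    refine ⟨(add_le_add hodd heven).trans
      (ncard_expansions_add_le_length_add_two (by omega) le_rfl), ?_⟩
    cases s with
    | zero => exact two_le_ncard_expansions_eight_five
    | succ s =>
      exact (add_le_add hodd heven).trans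
        (ncard_expansions_add_le_length_add_three (by omega) le_rfl)
end

section
/- Let E : ℕ → ℕ → ℕ be the recursively defined sequence (see context). There exist real numbers c > 1 and C > 0 such that for every n ∈ ℕ there exists d ∈ ℕ with (E d n : ℝ) ≥ C · c^n. That is, in characteristic 2 the maximum over d of dim Ext^n(k, Δ(2d)) grows at least exponentially in n. -/
lemma E_le_E_succ_succ (d m : ℕ) : E d m ≤ E (d + 1) (m + 1) := by
  rw [E]
  exact Nat.le_add_right _ _

lemma E_le_E_add_add (d m r : ℕ) : E d m ≤ E (d + r) (m + r) := by
  induction r with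
  | zero => rfl
  | succ r ih => exact ih.trans (E_le_E_succ_succ (d + r) (m + r))

lemma E_two_mul_add_one_succ (d m : ℕ) :
    E (2 * d + 1) (m + 1) = E (2 * d) m + E d (m + 1) := by
  rw [E, if_pos (odd_two_mul_add_one d), Nat.mul_div_cancel_left d two_pos]

lemma E_two_mul_add_one_zero (d : ℕ) : E (2 * d + 1) 0 = E d 0 := by
  rw [E, if_pos (odd_two_mul_add_one d), Nat.mul_div_cancel_left d two_pos]

lemma E_le_E_two_mul_add_one (d m : ℕ) : E d m ≤ E (2 * d + 1) m := by
  cases m with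
  | zero => exact (E_two_mul_add_one_zero d).ge
  | succ m =>
    rw [E_two_mul_add_one_succ]
    exact Nat.le_add_left _ _

lemma two_mul_E_le (d m : ℕ) : 2 * E d m ≤ E (4 * d + 9) (m + 3) := by
  have word_abba : E d m ≤ E (2 * (2 * d + 4)) (m + 2) :=
    calc E d m ≤ E (d + 1) (m + 1) := E_le_E_succ_succ d m
      _ ≤ E (2 * (d + 1) + 1) (m + 1) := E_le_E_two_mul_add_one _ _
      _ ≤ E (2 * (2 * (d + 1) + 1) + 1) (m + 1) := E_le_E_two_mul_add_one _ _
      _ ≤ E (2 * (2 * (d + 1) + 1) + 1 + 1) (m + 1 + 1) := E_le_E_succ_succ _ _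
      _ = E (2 * (2 * d + 4)) (m + 2) := by ring_nf
  have word_baaa : E d m ≤ E (2 * d + 4) (m + 3) :=
    (E_le_E_two_mul_add_one d m).trans (E_le_E_add_add (2 * d + 1) m 3)
  calc 2 * E d m = E d m + E d m := two_mul _
    _ ≤ E (2 * (2 * d + 4)) (m + 2) + E (2 * d + 4) (m + 3) := add_le_add word_abba word_baaa
    _ = E (2 * (2 * d + 4) + 1) (m + 3) := (E_two_mul_add_one_succ _ _).symm
    _ = E (4 * d + 9) (m + 3) := by ring_nf

lemma two_pow_le_E_three_mul (k : ℕ) : 2 ^ k ≤ E (3 * (4 ^ k - 1)) (3 * k) := by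
  induction k with
  | zero => simp [E]
  | succ k ih =>
    have index_succ : 3 * (4 ^ (k + 1) - 1) = 4 * (3 * (4 ^ k - 1)) + 9 := by
      have : 1 ≤ 4 ^ k := Nat.one_le_pow' k 3
      omega
    calc 2 ^ (k + 1) = 2 * 2 ^ k := pow_succ' 2 k
      _ ≤ 2 * E (3 * (4 ^ k - 1)) (3 * k) := Nat.mul_le_mul_left 2 ih
      _ ≤ E (4 * (3 * (4 ^ k - 1)) + 9) (3 * k + 3) := two_mul_E_le _ _
      _ = E (3 * (4 ^ (k + 1) - 1)) (3 * (k + 1)) := by rw [index_succ, mul_add_one]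

lemma two_pow_div_three_le_E (n : ℕ) : 2 ^ (n / 3) ≤ E (3 * (4 ^ (n / 3) - 1) + n % 3) n := by
  have h := (two_pow_le_E_three_mul (n / 3)).trans (E_le_E_add_add _ _ (n % 3))
  rwa [Nat.div_add_mod] at h

/-- Exponential growth for `p = 2`: there are `c > 1` and `C > 0` such that for every
`n` there is `d` with `dim Ext^n(k, Δ(2d)) = E d n ≥ C·c^n`. -/
theorem exponential_growth_p_two :
    ∃ c C : ℝ, 1 < c ∧ 0 < C ∧ ∀ n : ℕ, ∃ d : ℕ, C * c ^ n ≤ (E d n : ℝ) := by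
  refine ⟨2 ^ (1 / 3 : ℝ), 1 / 2, Real.one_lt_rpow one_lt_two (by norm_num), by norm_num,
    fun n => ⟨3 * (4 ^ (n / 3) - 1) + n % 3, ?_⟩⟩
  have exponent_le : (n : ℝ) / 3 - 1 ≤ (n / 3 : ℕ) := by
    have := Nat.lt_floor_add_one ((n : ℝ) / 3)
    rw [Nat.floor_div_ofNat, Nat.floor_natCast] at this
    linarith
  calc 1 / 2 * ((2 : ℝ) ^ (1 / 3 : ℝ)) ^ n
      = 2 ^ ((n : ℝ) / 3 - 1) := by
        rw [← Real.rpow_mul_natCast zero_le_two, Real.rpow_sub_one two_ne_zero]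
        ring_nf
    _ ≤ 2 ^ ((n / 3 : ℕ) : ℝ) := Real.rpow_le_rpow_of_exponent_le one_le_two exponent_le
    _ = 2 ^ (n / 3) := Real.rpow_natCast 2 (n / 3)
    _ ≤ E (3 * (4 ^ (n / 3) - 1) + n % 3) n := by exact_mod_cast two_pow_div_three_le_E n
end

section
/- Let p ≥ 2 be a prime and l a natural number. Then there exists B ∈ ℕ such that for every N ∈ ℕ, the number of tuples (m₁, …, m_l) ∈ ℕ^l with ∑_{j=1}^{l} p^{m_j} = N is at most B. That is, the cardinality of 𝒩_d = {(m₁,…,m_l) : m_j ≥ 0, ∑_j p^{m_j} = d + 1} is bounded independently of d. -/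
/-!
Let `a` be a positive increasing sequence that at least doubles over every `k` steps. If
`N = a (f 0) + ⋯ + a (f (l - 1))` and `m` is the largest exponent `f j`, then
`a m ≤ N ≤ l • a m < a (m + l * k)`, so `N` leaves at most `l * k` values for `m`. Choosing the
position and the value of a largest exponent leaves a representation of a fixed element by `l - 1`
terms, so induction on `l` bounds the number of representations of `N` by
`∏ i ∈ {1, …, l}, i * (i * k) = l ! ^ 2 * k ^ l`. For the powers of a prime, `k = 1`.
-/

open Finset
open scoped Nat

section Counting

theorem exists_subset_Ico_of_forall_lt_add {s : Set ℕ} {w : ℕ}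
    (h : ∀ x ∈ s, ∀ y ∈ s, y < x + w) : ∃ x, s ⊆ Set.Ico x (x + w) :=
  ⟨sInf s, fun y hy ↦ ⟨Nat.sInf_le hy, h _ (Nat.sInf_mem ⟨y, hy⟩) y hy⟩⟩

theorem encard_biUnion_le_card_mul {ι α : Type*} (t : Finset ι) (s : ι → Set α) (n : ℕ∞)
    (h : ∀ i ∈ t, (s i).encard ≤ n) : (⋃ i ∈ t, s i).encard ≤ #t * n :=
  calc
    (⋃ i ∈ t, s i).encard ≤ ∑ i ∈ t, (s i).encard := t.set_encard_biUnion_le s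
    _ ≤ #t • n := sum_le_card_nsmul t _ n h
    _ = #t * n := nsmul_eq_mul _ _

end Counting

section Growth

variable {M : Type*} [AddCommMonoid M] [PartialOrder M] {a : ℕ → M} {k : ℕ}

theorem two_pow_nsmul_le_of_two_nsmul_le [IsOrderedAddMonoid M]
    (hk : ∀ m, 2 • a m ≤ a (m + k)) (i m : ℕ) : 2 ^ i • a m ≤ a (m + i * k) := by
  induction i with
  | zero => simp
  | succ i ih =>
    calc
      2 ^ (i + 1) • a m = 2 • 2 ^ i • a m := by rw [pow_succ, mul_nsmul]
      _ ≤ 2 • a (m + i * k) := nsmul_le_nsmul_right ih 2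
      _ ≤ a (m + i * k + k) := hk _
      _ = a (m + (i + 1) * k) := by rw [Nat.succ_mul, Nat.add_assoc]

theorem nsmul_lt_of_two_nsmul_le [IsOrderedCancelAddMonoid M] (hpos : ∀ m, 0 < a m)
    (hk : ∀ m, 2 • a m ≤ a (m + k)) (n m : ℕ) : n • a m < a (m + n * k) :=
  (nsmul_lt_nsmul_left (hpos m) n.lt_two_pow_self).trans_le
    (two_pow_nsmul_le_of_two_nsmul_le hk n m)

end Growth

/-- The set of ordered representations of `N` as a sum of `l` terms of the sequence `a`, each
given by its tuple of exponents (indices into `a`). For `a m = p ^ m` and `N = d + 1` it is the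
set `𝒩_d`. -/
def representations {M : Type*} [AddCommMonoid M] (a : ℕ → M) (l : ℕ) (N : M) :
    Set (Fin l → ℕ) :=
  {f | ∑ j, a (f j) = N}

/-- The set of exponents that occur as the largest one in some representation of `N` as a sum of
`l` terms of the sequence `a`. -/
def topExponents {M : Type*} [AddCommMonoid M] (a : ℕ → M) (l : ℕ) (N : M) : Set ℕ :=
  {m | ∃ f ∈ representations a l N, IsGreatest (Set.range f) m}

section TopExponents

variable {M : Type*} [AddCommMonoid M] {a : ℕ → M} {l m : ℕ} {N : M}

theorem le_of_mem_topExponents [Preorder M] [IsOrderedAddMonoid M] (hnonneg : ∀ m, 0 ≤ a m)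
    (hm : m ∈ topExponents a l N) : a m ≤ N := by
  obtain ⟨f, rfl, ⟨j, rfl⟩, -⟩ := hm
  exact single_le_sum (f := fun i ↦ a (f i)) (fun i _ ↦ hnonneg (f i)) (mem_univ j)

theorem le_nsmul_of_mem_topExponents [Preorder M] [IsOrderedAddMonoid M] (hmono : Monotone a)
    (hm : m ∈ topExponents a l N) : N ≤ l • a m := by
  obtain ⟨f, rfl, -, hmax⟩ := hm
  simpa using sum_le_card_nsmul univ (fun i ↦ a (f i)) (a m)
    fun i _ ↦ hmono (hmax (Set.mem_range_self i))

theorem exists_topExponents_subset_Ico [Preorder M] [IsOrderedAddMonoid M]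
    (hmono : Monotone a) (hnonneg : ∀ m, 0 ≤ a m) {w : ℕ} (hw : ∀ m, l • a m < a (m + w)) :
    ∃ x, topExponents a l N ⊆ Set.Ico x (x + w) := by
  refine exists_subset_Ico_of_forall_lt_add fun x hx y hy ↦ hmono.reflect_lt ?_
  calc
    a y ≤ N := le_of_mem_topExponents hnonneg hy
    _ ≤ l • a x := le_nsmul_of_mem_topExponents hmono hx
    _ < a (x + w) := hw x

theorem exists_apply_mem_topExponents {f : Fin (l + 1) → ℕ}
    (hf : f ∈ representations a (l + 1) N) : ∃ j, f j ∈ topExponents a (l + 1) N := by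
  obtain ⟨j, hj⟩ := Finite.exists_max f
  exact ⟨j, f, hf, Set.mem_range_self j, Set.forall_mem_range.2 hj⟩

end TopExponents

section Recursion

variable {M : Type*} [AddCommMonoid M] {a : ℕ → M} {l : ℕ}

theorem encard_representations_apply_eq_le [IsLeftCancelAdd M] {B : ℕ∞}
    (hB : ∀ N, (representations a l N).encard ≤ B) (N : M) (j : Fin (l + 1)) (m : ℕ) :
    {f ∈ representations a (l + 1) N | f j = m}.encard ≤ B := by
  obtain hempty | ⟨g, hg, hgj⟩ := {f ∈ representations a (l + 1) N | f j = m}.eq_empty_or_nonempty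
  · simp [hempty]
  -- `M` has no subtraction, so `N - a m` is obtained from one representation in the fibre.
  · have hsplit (f : Fin (l + 1) → ℕ) : ∑ i, a (f i) = a (f j) + ∑ i, a (j.removeNth f i) :=
      Fin.sum_univ_succAbove (fun i ↦ a (f i)) j
    refine (Set.encard_le_encard_of_injOn (f := fun f ↦ j.removeNth f) ?_ ?_).trans
      (hB (∑ i, a (j.removeNth g i)))
    · rintro f ⟨hf, hfj⟩
      have hsum : ∑ i, a (f i) = ∑ i, a (g i) := hf.trans hg.symm
      rw [hsplit f, hsplit g, hfj, hgj] at hsum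
      exact add_left_cancel hsum
    · rintro f ⟨-, hfj⟩ f' ⟨-, hfj'⟩ (hrest : j.removeNth f = j.removeNth f')
      rw [← Fin.insertNth_self_removeNth j f, ← Fin.insertNth_self_removeNth j f', hfj, hfj', hrest]

theorem encard_representations_succ_le [IsLeftCancelAdd M] {B : ℕ∞}
    (hB : ∀ N, (representations a l N).encard ≤ B) {N : M} {t : Finset ℕ}
    (ht : topExponents a (l + 1) N ⊆ t) :
    (representations a (l + 1) N).encard ≤ ((l + 1) * #t : ℕ) * B := by
  have hcover : representations a (l + 1) N ⊆
      ⋃ q ∈ (univ : Finset (Fin (l + 1))) ×ˢ t,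
        {f ∈ representations a (l + 1) N | f q.1 = q.2} := by
    intro f hf
    obtain ⟨j, hj⟩ := exists_apply_mem_topExponents hf
    have hmem : (j, f j) ∈ (univ : Finset (Fin (l + 1))) ×ˢ t :=
      mem_product.2 ⟨mem_univ j, ht hj⟩
    exact Set.mem_biUnion hmem ⟨hf, rfl⟩
  calc
    (representations a (l + 1) N).encard
      ≤ #((univ : Finset (Fin (l + 1))) ×ˢ t) * B :=
        (Set.encard_le_encard hcover).trans <| encard_biUnion_le_card_mul _ _ B fun q _ ↦
          encard_representations_apply_eq_le hB N q.1 q.2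
    _ = ((l + 1) * #t : ℕ) * B := by rw [card_product, card_univ, Fintype.card_fin]

end Recursion

theorem card_tuples_bounded_general {M : Type*} [AddCommMonoid M] [PartialOrder M]
    [IsOrderedCancelAddMonoid M] {a : ℕ → M} {k : ℕ} (hmono : Monotone a) (hpos : ∀ m, 0 < a m)
    (hk : ∀ m, 2 • a m ≤ a (m + k)) (l : ℕ) (N : M) :
    (representations a l N).encard ≤ (l ! ^ 2 * k ^ l : ℕ) := by
  induction l generalizing N with
  | zero => simpa using Set.encard_le_one_iff_subsingleton.2 Set.subsingleton_of_subsingleton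
  | succ l ih =>
    obtain ⟨x, hx⟩ := exists_topExponents_subset_Ico (N := N) hmono (fun m ↦ (hpos m).le)
      (nsmul_lt_of_two_nsmul_le hpos hk (l + 1))
    rw [← coe_Ico] at hx
    refine (encard_representations_succ_le ih hx).trans_eq ?_
    rw [Nat.card_Ico, Nat.add_sub_cancel_left, ← Nat.cast_mul, Nat.factorial_succ]
    ring_nf

/-- For a fixed prime `p` and fixed length `l`, the number of (ordered) tuples
`(m₁, …, m_l) ∈ ℕ^l` with `∑_j p^{m_j} = N` is bounded independently of `N`. -/
theorem card_tuples_bounded (p : ℕ) (hp : p.Prime) (l : ℕ) :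
    ∃ B : ℕ, ∀ N : ℕ, Nat.card {f : Fin l → ℕ // ∑ j, p ^ f j = N} ≤ B := by
  have hdouble (m : ℕ) : 2 • p ^ m ≤ p ^ (m + 1) := by
    simpa [pow_succ'] using Nat.mul_le_mul_right (p ^ m) hp.two_le
  exact ⟨l ! ^ 2 * 1 ^ l, fun N ↦ (Set.encard_le_coe_iff_finite_ncard_le.1 <|
    card_tuples_bounded_general (pow_right_mono₀ hp.one_le) (pow_pos hp.pos) hdouble l N).2⟩
end

section
/- Let p be a prime and r a natural number. Let a : Fin r → ℕ satisfy 0 < a i and p ∤ a i for every i. Suppose s, t : Fin r → ℕ are strictly increasing (s i < s j and t i < t j whenever i < j) and ∑_i a i · p^{s i} = ∑_i a i · p^{t i}. Then s = t. -/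
/-!
If `s` and `t` agree below `i` while `s i < t i`, then `p ^ (s i + 1)` divides every term of
`∑ j, (a j * p ^ s j - a j * p ^ t j) = 0` other than `a i * p ^ s i`, hence also that one, and
cancelling `p ^ s i` gives `p ∣ a i`.
-/

theorem dvd_of_dvd_sum_of_forall_ne_dvd {R ι : Type*} [NonUnitalRing R] {S : Finset ι}
    {f : ι → R} {x : R} {i : ι} (hi : i ∈ S) (hsum : x ∣ ∑ j ∈ S, f j)
    (hne : ∀ j ∈ S, j ≠ i → x ∣ f j) : x ∣ f i := by
  classical
  rw [← Finset.add_sum_erase S f hi] at hsum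
  refine (dvd_add_left (Finset.dvd_sum fun j hj ↦ ?_)).mp hsum
  exact hne j (Finset.mem_of_mem_erase hj) (Finset.ne_of_mem_erase hj)

section CommRing

variable {R ι : Type*} [CommRing R] [LinearOrder ι] [Fintype ι] {p : R} {a : ι → R} {s t : ι → ℕ}

theorem exponent_le_of_sum_eq_of_eq_below (hp : IsRegular p) (hs : StrictMono s) (ht : Monotone t)
    (h : ∑ j, a j * p ^ s j = ∑ j, a j * p ^ t j) {i : ι} (hai : ¬ p ∣ a i)
    (hbelow : ∀ j < i, s j = t j) : t i ≤ s i := by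
  by_contra! hlt
  have dvd_term {j : ι} {e : ℕ} (he : s i < e) : p ^ (s i + 1) ∣ a j * p ^ e :=
    (pow_dvd_pow p he).mul_left _
  have dvd_diff : p ^ (s i + 1) ∣ a i * p ^ s i - a i * p ^ t i := by
    refine dvd_of_dvd_sum_of_forall_ne_dvd (f := fun j ↦ a j * p ^ s j - a j * p ^ t j)
      (Finset.mem_univ i) ?_ fun j _ hj ↦ ?_
    · simp only [Finset.sum_sub_distrib, h, sub_self, dvd_zero]
    · rcases hj.lt_or_gt with hji | hij
      · simp only [hbelow j hji, sub_self, dvd_zero]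
      · exact dvd_sub (dvd_term (hs hij)) (dvd_term (hlt.trans_le (ht hij.le)))
  have dvd_lead : p ^ s i * p ∣ p ^ s i * a i := by
    rw [← pow_succ, mul_comm _ (a i)]
    exact (dvd_sub_left (dvd_term hlt)).mp dvd_diff
  exact hai ((hp.left.pow (s i)).dvd_cancel_left.mp dvd_lead)

theorem exponents_unique_general (hp : IsRegular p) (ha : ∀ i, ¬ p ∣ a i)
    (hs : StrictMono s) (ht : StrictMono t)
    (h : ∑ i, a i * p ^ s i = ∑ i, a i * p ^ t i) : s = t := by
  funext i
  induction i using WellFoundedLT.induction with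
  | ind i eq_below =>
    exact le_antisymm
      (exponent_le_of_sum_eq_of_eq_below hp ht hs.monotone h.symm (ha i)
        fun j hj ↦ (eq_below j hj).symm)
      (exponent_le_of_sum_eq_of_eq_below hp hs ht.monotone h (ha i) eq_below)

end CommRing

/-- Uniqueness of the representation `∑ aᵢ p^{sᵢ}` with all `aᵢ` positive and prime to
`p` and strictly increasing exponents: if two such representations with the same
coefficients are equal, then the exponent sequences agree. -/
theorem exponents_unique (p : ℕ) (hp : p.Prime) (r : ℕ) (a : Fin r → ℕ)
    (ha : ∀ i, 0 < a i) (ha' : ∀ i, ¬ p ∣ a i) (s t : Fin r → ℕ)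
    (hs : StrictMono s) (ht : StrictMono t)
    (h : ∑ i, a i * p ^ s i = ∑ i, a i * p ^ t i) : s = t :=
  exponents_unique_general (p := (p : ℤ)) (a := fun i ↦ (a i : ℤ))
    (.of_ne_zero (mod_cast hp.ne_zero)) (mod_cast ha') hs ht (mod_cast h)
end

section
/- Let E : ℕ → ℕ → ℕ be the recursively defined sequence (see context). Then for every fixed n ∈ ℕ there exists B ∈ ℕ such that E d n ≤ B for all d ∈ ℕ. That is, in characteristic 2 and for fixed cohomological degree n, the dimensions dim Ext^n(k, Δ(2d)) are bounded independently of d. -/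
/-!
Unrolling the recursion along the halvings `d + 1 ↦ (d + 1) / 2` writes `E d (n + 1)` as the sum of
the `E ((d + 1) / 2 ^ i - 2) n` over the `i` with `2 ^ i ∣ d + 1` (and `2 ^ i ≠ d + 1`). At most
`n + 2` of these terms are nonzero: `E e n ≠ 0` forces the binary digit sum of `e + 1` to be at most
`n + 1`, whereas `e + 1` ends in at least `n + 2` binary digits `1` if `2 ^ (n + 2) ∣ e + 2`.
Inductively, `E d n ≤ (n + 1)!`.
-/

open scoped Nat

section DigitSum

variable {b : ℕ}

lemma sum_digits_eq_mod_add_sum_digits_div (hb : 1 < b) (n : ℕ) :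
    (b.digits n).sum = n % b + (b.digits (n / b)).sum := by
  rcases eq_or_ne n 0 with rfl | hn
  · simp
  · rw [Nat.digits_eq_cons_digits_div hb hn, List.sum_cons]

lemma sum_digits_succ_le (hb : 1 < b) (n : ℕ) :
    (b.digits (n + 1)).sum ≤ (b.digits n).sum + 1 := by
  induction n using Nat.strong_induction_on with
  | _ n ih =>
    rw [sum_digits_eq_mod_add_sum_digits_div hb (n + 1), sum_digits_eq_mod_add_sum_digits_div hb n]
    by_cases hdvd : b ∣ n + 1
    · have hn : 0 < n := by
        have := Nat.le_of_dvd n.succ_pos hdvd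
        lia
      have hcarry := ih (n / b) (Nat.div_lt_self hn hb)
      rw [Nat.succ_div_of_dvd hdvd, Nat.mod_eq_zero_of_dvd hdvd]
      lia
    · have hmod : (n + 1) % b ≤ n % b + 1 := by
        rw [← Nat.mod_add_mod]
        exact Nat.mod_le _ _
      rw [Nat.succ_div_of_not_dvd hdvd]
      lia

lemma mul_pred_le_sum_digits_of_pow_dvd_succ (hb : 1 < b) {k n : ℕ} (h : b ^ k ∣ n + 1) :
    k * (b - 1) ≤ (b.digits n).sum := by
  induction k generalizing n with
  | zero => simp
  | succ k ih =>
    have hdvd : b ∣ n + 1 := dvd_of_mul_left_dvd (pow_succ b k ▸ h)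
    have hquot : b * (n / b + 1) = n + 1 := by
      rw [← Nat.succ_div_of_dvd hdvd, Nat.mul_div_cancel' hdvd]
    have hlast : n % b = b - 1 := by
      have := Nat.div_add_mod n b
      lia
    have hrest : b ^ k ∣ n / b + 1 := by
      apply Nat.dvd_of_mul_dvd_mul_left (zero_lt_one.trans hb)
      rwa [hquot, ← pow_succ']
    rw [sum_digits_eq_mod_add_sum_digits_div hb, hlast, Nat.succ_mul, Nat.add_comm]
    exact Nat.add_le_add_left (ih hrest) _

end DigitSum

lemma add_two_eq_two_mul_of_odd_succ {d : ℕ} (h : Odd (d + 1)) : d + 2 = 2 * (d / 2 + 1) := by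
  obtain ⟨c, hc⟩ := h
  lia

lemma sum_digits_two_add_two_of_odd_succ {d : ℕ} (h : Odd (d + 1)) :
    (Nat.digits 2 (d + 2)).sum = (Nat.digits 2 (d / 2 + 1)).sum := by
  rw [add_two_eq_two_mul_of_odd_succ h, Nat.digits_base_mul one_lt_two (Nat.succ_pos _),
    List.sum_cons, zero_add]

lemma sum_digits_two_succ_le_of_E_ne_zero {d m : ℕ} (h : E d m ≠ 0) :
    (Nat.digits 2 (d + 1)).sum ≤ m + 1 := by
  fun_induction E d m with
  | case1 => simp
  | case2 => exact absurd rfl h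
  | case3 d hodd ih =>
    exact (sum_digits_two_add_two_of_odd_succ hodd).trans_le (ih h)
  | case4 => exact absurd rfl h
  | case5 d m ih_pred ih_half =>
    by_cases hpred : E d m = 0
    · obtain ⟨hodd, hhalf⟩ : Odd (d + 1) ∧ E (d / 2) (m + 1) ≠ 0 := by
        simpa [hpred] using h
      exact (sum_digits_two_add_two_of_odd_succ hodd).trans_le (ih_half hhalf)
    · exact (sum_digits_succ_le one_lt_two (d + 1)).trans (Nat.succ_le_succ (ih_pred hpred))

lemma E_eq_zero_of_two_pow_dvd {d m : ℕ} (h : 2 ^ (m + 2) ∣ d + 2) : E d m = 0 := by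
  by_contra hE
  have hupper := sum_digits_two_succ_le_of_E_ne_zero hE
  have hlower := mul_pred_le_sum_digits_of_pow_dvd_succ one_lt_two h
  lia

lemma E_zero_right_le_one (d : ℕ) : E d 0 ≤ 1 := by
  induction d using Nat.strong_induction_on with
  | _ d ih =>
    rcases d with _ | d
    · simp [E]
    · rw [E]
      split_ifs
      · exact ih (d / 2) (by lia)
      · exact zero_le_one

lemma E_succ_right_le_mul_of_not_two_pow_dvd {n B k d : ℕ} (hB : ∀ e, E e n ≤ B)
    (h : ¬ 2 ^ k ∣ d + 1) : E d (n + 1) ≤ k * B := by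
  induction k generalizing d with
  | zero => simp at h
  | succ k ih =>
    rcases d with _ | d
    · simp [E]
    · rw [E, add_mul, one_mul, add_comm]
      gcongr
      · split_ifs with hodd
        · apply ih
          contrapose h
          rw [add_two_eq_two_mul_of_odd_succ hodd, pow_succ']
          exact mul_dvd_mul_left 2 h
        · exact Nat.zero_le _
      · exact hB d

lemma E_succ_right_le_mul {n B : ℕ} (hB : ∀ e, E e n ≤ B) (d : ℕ) :
    E d (n + 1) ≤ (n + 2) * B := by
  induction d using Nat.strong_induction_on with
  | _ d ih =>
    by_cases hdvd : 2 ^ (n + 2) ∣ d + 1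
    · rcases d with _ | d
      · simp [E]
      · rw [E, E_eq_zero_of_two_pow_dvd hdvd, zero_add]
        split_ifs
        · exact ih (d / 2) (by lia)
        · exact Nat.zero_le _
    · exact E_succ_right_le_mul_of_not_two_pow_dvd hB hdvd

lemma E_le_factorial (d n : ℕ) : E d n ≤ (n + 1)! := by
  induction n generalizing d with
  | zero => exact E_zero_right_le_one d
  | succ n ih => exact E_succ_right_le_mul ih d

/-- For `p = 2` and fixed cohomological degree `n`, the dimensions
`dim Ext^n(k, Δ(2d)) = E d n` are bounded independently of `d`. -/
theorem E_bounded_in_d (n : ℕ) : ∃ B : ℕ, ∀ d : ℕ, E d n ≤ B :=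
  ⟨(n + 1)!, fun d => E_le_factorial d n⟩
end

section
/- Let p be an odd prime and e : ℕ → ℕ → ℕ the recursively defined sequence (see context). Then for every fixed n ∈ ℕ there exists B ∈ ℕ such that e d n ≤ B for all d ∈ ℕ. That is, in characteristic p and for fixed cohomological degree n, the dimensions dim Ext^n(k, Δ(2d)) are bounded independently of d. -/
/-!
Let `s` be the base-`p` digit sum and `χ a = 2 ^ (-s a)`, so that appending a digit `r` multiplies
`χ` by `2 ^ (-r)`. The recursion for `e` reads the last digit of `d`, and it is compatible with the
majorant `e p d n ≤ 4 ^ n * (4 * χ (d + 1) - χ d)`. The subtracted term controls carries: the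
recursion can pass from `d = p * k + (p - 1)` to `k` many times without lowering `n`, but each time
`χ d` is smaller than `χ k` by the factor `2 ^ (p - 1)`, so the extra summands picked up on the way
are dominated by a geometric series. Since `χ ≤ 1`, this bounds `e p d n` by `4 ^ (n + 1)`,
uniformly in `d` and `p`.
-/

section Recursion

variable {p : ℕ}

lemma mul_add_pred_add_one (hp : 0 < p) (k : ℕ) : p * k + (p - 1) + 1 = p * (k + 1) := by
  rw [Nat.mul_succ]
  lia

lemma e_mul_succ_zero (hp : 0 < p) (k : ℕ) : e p (p * (k + 1)) 0 = 0 := by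
  have hmod : (p * k + (p - 1) + 1) % p = 0 := by simp [mul_add_pred_add_one hp]
  rw [← mul_add_pred_add_one hp, e.eq_def]
  simp [hmod]

lemma e_mul_succ_succ (hp : 0 < p) (k m : ℕ) :
    e p (p * (k + 1)) (m + 1) = e p (p * k + (p - 1)) m := by
  have hmod : (p * k + (p - 1) + 1) % p = 0 := by simp [mul_add_pred_add_one hp]
  rw [← mul_add_pred_add_one hp, e.eq_def]
  simp [hmod]

lemma e_mul_add_pred (hp : 1 < p) (k m : ℕ) :
    e p (p * k + (p - 1)) m = (if m = 0 then 0 else e p (p * k) (m - 1)) + e p k m := by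
  obtain ⟨q, rfl⟩ : ∃ q, p = q + 2 := ⟨p - 2, by lia⟩
  have hpred : ((q + 2) * k + q + 1) % (q + 2) ≠ 0 := by simp [Nat.add_assoc]
  have hnext : (q + 2) * k + q + 2 = (q + 2) * (k + 1) := by ring
  have hmod : ((q + 2) * k + q + 2) % (q + 2) = 0 := hnext ▸ Nat.mul_mod_right _ _
  have hdiv : ((q + 2) * k + q + 2) / (q + 2) - 1 = k := by simp [hnext]
  have hsub : (q + 2) * k + q + 2 - (q + 2) = (q + 2) * k := by lia
  rw [show (q + 2) * k + (q + 2 - 1) = (q + 2) * k + q + 1 by lia, e.eq_def]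
  simp only [hpred, hmod, hdiv, hsub, dif_pos, dif_neg, not_false_eq_true]
  cases m <;> rfl

lemma e_mul_add_eq_zero {r : ℕ} (hr : 0 < r) (hrp : r + 1 < p) (k m : ℕ) :
    e p (p * k + r) m = 0 := by
  obtain ⟨r, rfl⟩ : ∃ r', r = r' + 1 := ⟨r - 1, by lia⟩
  have hmod : (p * k + r + 1) % p ≠ 0 := by
    rw [Nat.add_assoc, Nat.mul_add_mod, Nat.mod_eq_of_lt (by lia)]; lia
  have hmod' : (p * k + r + 2) % p ≠ 0 := by
    rw [Nat.add_assoc, Nat.mul_add_mod, Nat.mod_eq_of_lt (by lia)]; lia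
  rw [← Nat.add_assoc, e.eq_def]
  simp [hmod, hmod']

end Recursion

/-- The weight `2 ^ (-s)`, where `s` is the sum of the base-`p` digits of `a`. -/
def digitWeight (p a : ℕ) : ℚ := (1 / 2) ^ (p.digits a).sum

/-- The value at `d` of the function which, multiplied by `4 ^ n`, dominates `e p d n`. The
coefficients `4` and `-1` are one choice for which the recursion for `e` preserves this bound. -/
def digitMajorant (p d : ℕ) : ℚ := 4 * digitWeight p (d + 1) - digitWeight p d

section Weights

variable {p : ℕ}

lemma digitWeight_nonneg (p a : ℕ) : 0 ≤ digitWeight p a := by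
  unfold digitWeight; positivity

lemma digitWeight_le_one (p a : ℕ) : digitWeight p a ≤ 1 :=
  pow_le_one₀ (by norm_num) (by norm_num)

@[simp]
lemma digitWeight_zero (p : ℕ) : digitWeight p 0 = 1 := by simp [digitWeight]

lemma digitWeight_mul_add {r : ℕ} (hp : 1 < p) (hr : r < p) (a : ℕ) :
    digitWeight p (p * a + r) = (1 / 2) ^ r * digitWeight p a := by
  by_cases h : r ≠ 0 ∨ a ≠ 0
  · rw [digitWeight, Nat.add_comm, Nat.digits_add p hp r a hr h, List.sum_cons, pow_add,
      digitWeight]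
  · obtain ⟨rfl, rfl⟩ : r = 0 ∧ a = 0 := by simpa using h
    simp

lemma digitWeight_mul (hp : 1 < p) (a : ℕ) : digitWeight p (p * a) = digitWeight p a := by
  simpa using digitWeight_mul_add hp hp.pos a

lemma digitMajorant_le (p d : ℕ) : digitMajorant p d ≤ 4 * digitWeight p (d + 1) :=
  sub_le_self _ (digitWeight_nonneg p d)

lemma digitMajorant_mul_add {r : ℕ} (hr : r + 1 < p) (k : ℕ) :
    digitMajorant p (p * k + r) = (1 / 2) ^ r * digitWeight p k := by
  rw [digitMajorant, Nat.add_assoc, digitWeight_mul_add (by lia) hr,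
    digitWeight_mul_add (by lia) (by lia)]
  ring

lemma digitMajorant_mul (hp : 1 < p) (k : ℕ) : digitMajorant p (p * k) = digitWeight p k := by
  simpa using digitMajorant_mul_add (r := 0) hp k

lemma digitMajorant_mul_add_pred_le (hp : 1 < p) (k : ℕ) :
    digitMajorant p (p * k + (p - 1)) ≤ 4 * digitWeight p (k + 1) := by
  simpa only [mul_add_pred_add_one hp.pos, digitWeight_mul hp]
    using digitMajorant_le p (p * k + (p - 1))

lemma le_digitMajorant_mul_add_pred (hp : 1 < p) (k : ℕ) :
    digitWeight p k / 4 + digitMajorant p k ≤ digitMajorant p (p * k + (p - 1)) := by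
  have hhalf : (1 / 2 : ℚ) ^ (p - 1) ≤ 1 / 2 :=
    pow_le_of_le_one (by norm_num) (by norm_num) (by lia)
  have hcarry : (1 / 2) ^ (p - 1) * digitWeight p k ≤ 1 / 2 * digitWeight p k :=
    mul_le_mul_of_nonneg_right hhalf (digitWeight_nonneg p k)
  rw [digitMajorant, digitMajorant, mul_add_pred_add_one hp.pos, digitWeight_mul hp,
    digitWeight_mul_add hp (by lia)]
  linarith [digitWeight_nonneg p k]

end Weights

section Bound

variable {p : ℕ}

lemma e_zero_le_pow_mul_digitMajorant (hp : 1 < p) (n : ℕ) :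
    (e p 0 n : ℚ) ≤ 4 ^ n * digitMajorant p 0 := by
  have hmajorant : digitMajorant p 0 = 1 := by simpa using digitMajorant_mul hp 0
  rcases n with _ | n
  · simp [e, hmajorant]
  · rw [e, Nat.cast_zero, hmajorant]
    positivity

lemma e_mul_succ_le_pow_mul_digitMajorant (hp : 1 < p) (k : ℕ)
    (hpred : ∀ m, (e p (p * k + (p - 1)) m : ℚ) ≤ 4 ^ m * digitMajorant p (p * k + (p - 1)))
    (n : ℕ) :
    (e p (p * (k + 1)) n : ℚ) ≤ 4 ^ n * digitMajorant p (p * (k + 1)) := by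
  rw [digitMajorant_mul hp]
  rcases n with _ | n
  · simpa [e_mul_succ_zero hp.pos] using digitWeight_nonneg p (k + 1)
  calc (e p (p * (k + 1)) (n + 1) : ℚ)
      = e p (p * k + (p - 1)) n := by rw [e_mul_succ_succ hp.pos]
    _ ≤ 4 ^ n * digitMajorant p (p * k + (p - 1)) := hpred n
    _ ≤ 4 ^ n * (4 * digitWeight p (k + 1)) := by gcongr; exact digitMajorant_mul_add_pred_le hp k
    _ = 4 ^ (n + 1) * digitWeight p (k + 1) := by ring

lemma e_mul_add_pred_le_pow_mul_digitMajorant (hp : 1 < p) (k n : ℕ)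
    (hmul : ∀ m, (e p (p * k) m : ℚ) ≤ 4 ^ m * digitMajorant p (p * k))
    (hk : (e p k n : ℚ) ≤ 4 ^ n * digitMajorant p k) :
    (e p (p * k + (p - 1)) n : ℚ) ≤ 4 ^ n * digitMajorant p (p * k + (p - 1)) := by
  have hfirst : ((if n = 0 then 0 else e p (p * k) (n - 1) : ℕ) : ℚ) ≤
      4 ^ n * (digitWeight p k / 4) := by
    rcases n with _ | m
    · simpa using div_nonneg (digitWeight_nonneg p k) zero_le_four
    · have hpow : (4 : ℚ) ^ (m + 1) * (digitWeight p k / 4) = 4 ^ m * digitWeight p k := by ring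
      simpa [hpow, digitMajorant_mul hp] using hmul m
  calc (e p (p * k + (p - 1)) n : ℚ)
      = (if n = 0 then 0 else e p (p * k) (n - 1) : ℕ) + e p k n := by
        rw [e_mul_add_pred hp, Nat.cast_add]
    _ ≤ 4 ^ n * (digitWeight p k / 4) + 4 ^ n * digitMajorant p k := add_le_add hfirst hk
    _ = 4 ^ n * (digitWeight p k / 4 + digitMajorant p k) := by ring
    _ ≤ 4 ^ n * digitMajorant p (p * k + (p - 1)) := by
        gcongr; exact le_digitMajorant_mul_add_pred hp k

theorem e_le_pow_mul_digitMajorant (hp : 1 < p) (d n : ℕ) :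
    (e p d n : ℚ) ≤ 4 ^ n * digitMajorant p d := by
  induction d using Nat.strong_induction_on generalizing n with
  | _ d ih =>
    obtain ⟨k, r, hr, rfl⟩ : ∃ k r, r < p ∧ d = p * k + r :=
      ⟨d / p, d % p, Nat.mod_lt d hp.pos, (Nat.div_add_mod d p).symm⟩
    obtain rfl | rfl | ⟨hr0, hrp⟩ : r = 0 ∨ r = p - 1 ∨ 0 < r ∧ r + 1 < p := by lia
    · rcases k with _ | k
      · exact e_zero_le_pow_mul_digitMajorant hp n
      · have hlt : p * k + (p - 1) < p * (k + 1) := by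
          rw [← mul_add_pred_add_one hp.pos]; exact Nat.lt_succ_self _
        exact e_mul_succ_le_pow_mul_digitMajorant hp k (ih _ hlt) n
    · have hk : k ≤ p * k := Nat.le_mul_of_pos_left k hp.pos
      exact e_mul_add_pred_le_pow_mul_digitMajorant hp k n (ih _ (by lia)) (ih k (by lia) n)
    · rw [e_mul_add_eq_zero hr0 hrp, digitMajorant_mul_add hrp, Nat.cast_zero]
      have hweight := digitWeight_nonneg p k
      positivity

end Bound

theorem e_bounded_in_d_general {p : ℕ} (hp : 1 < p) (d n : ℕ) : e p d n ≤ 4 ^ (n + 1) := by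
  have hbound : (e p d n : ℚ) ≤ 4 ^ (n + 1) :=
    calc (e p d n : ℚ) ≤ 4 ^ n * digitMajorant p d := e_le_pow_mul_digitMajorant hp d n
      _ ≤ 4 ^ n * (4 * 1) := by
          gcongr
          exact (digitMajorant_le p d).trans (by gcongr; exact digitWeight_le_one p (d + 1))
      _ = 4 ^ (n + 1) := by ring
  exact_mod_cast hbound

/-- For an odd prime `p` and fixed cohomological degree `n`, the dimensions
`dim Ext^n(k, Δ(2d)) = e p d n` are bounded independently of `d`. -/
theorem e_bounded_in_d (p : ℕ) (hp : p.Prime) (hodd : Odd p) (n : ℕ) :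
    ∃ B : ℕ, ∀ d : ℕ, e p d n ≤ B := by
  exact ⟨4 ^ (n + 1), fun d => e_bounded_in_d_general hp.one_lt d n⟩
end
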